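/- arXiv:1010.5764 — 2 statements merged into one kernel-verified Lean document; each statement's English description precedes it below -/
import Mathlib

section
/- Let q be a prime power and let C ⊆ F_q^n be an F_q-linear subspace. Then C is a (2,1)-separating code if and only if C is an intersecting code, i.e., any two nonzero codewords c, c' ∈ C have intersecting supports (there is a coordinate i with c_i ≠ 0 and c'_i ≠ 0). -/
/-!
Coordinatewise, the triangle inequality `d(x,z) ≤ d(x,y) + d(y,z)` is an equality at `i` exactly
when `y i ∈ {x i, z i}`; summing over coordinates, it is strict iff some `i` has
`y i ∉ {x i, z i}` (`hammingDist_lt_add_iff`). For a linear code, translating `y` to `0` turns this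
condition into the statement that the supports of `x - y` and `z - y` meet. Conversely, nonzero
codewords `c, c'` with disjoint supports are distinct, so `c, 0, c'` is a triple violating
separation.
-/

/-- A code `C ⊆ Aⁿ` (here with coordinates indexed by a finite type `ι`) is
`(2,1)`-separating if all pairwise distinct `x, y, z ∈ C` satisfy the strict
triangle inequality `d(x,z) < d(x,y) + d(y,z)` for the Hamming distance. -/
def IsSeparating21 {ι A : Type*} [Fintype ι] [DecidableEq A] (C : Set (ι → A)) : Prop :=
  ∀ x ∈ C, ∀ y ∈ C, ∀ z ∈ C, x ≠ y → y ≠ z → x ≠ z →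
    hammingDist x z < hammingDist x y + hammingDist y z

/-- The Hamming triangle inequality is strict iff some coordinate of the middle word differs from
those of both outer words. -/
theorem hammingDist_lt_add_iff {ι A : Type*} [Fintype ι] [DecidableEq A] (x y z : ι → A) :
    hammingDist x z < hammingDist x y + hammingDist y z ↔ ∃ i, x i ≠ y i ∧ y i ≠ z i := by
  simp only [hammingDist, Finset.card_filter, ← Finset.sum_add_distrib]
  constructor
  · intro h
    obtain ⟨i, -, hi⟩ := Finset.exists_lt_of_sum_lt h
    refine ⟨i, ?_⟩
    by_contra hcon
    grind
  · rintro ⟨i, h1, h2⟩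
    refine Finset.sum_lt_sum (fun j _ => ?_) ⟨i, Finset.mem_univ i, ?_⟩ <;> grind

/-- A linear code `C ⊆ F_qⁿ` is `(2,1)`-separating if and only if it is an
intersecting code: any two nonzero codewords have intersecting supports. -/
theorem linear_separating_iff_intersecting
    (q : ℕ) (hq : IsPrimePow q)
    (F : Type*) [Field F] [Fintype F] [DecidableEq F] (hF : Fintype.card F = q)
    (n : ℕ) (C : Submodule F (Fin n → F)) :
    IsSeparating21 (C : Set (Fin n → F)) ↔
      (∀ c ∈ C, c ≠ 0 → ∀ c' ∈ C, c' ≠ 0 → ∃ i : Fin n, c i ≠ 0 ∧ c' i ≠ 0) := by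
  constructor
  · intro h c hc hc0 c' hc' hd0
    by_cases hcc : c = c'
    · obtain ⟨i, hi⟩ := Function.ne_iff.mp hc0
      exact ⟨i, hi, hcc ▸ hi⟩
    · obtain ⟨i, h1, h2⟩ := (hammingDist_lt_add_iff c 0 c').mp
        (h c hc 0 C.zero_mem c' hc' hc0 hd0.symm hcc)
      exact ⟨i, h1, h2.symm⟩
  · intro h x hx y hy z hz hxy hyz _
    obtain ⟨i, h1, h2⟩ := h (x - y) (C.sub_mem hx hy) (sub_ne_zero.mpr hxy)
      (z - y) (C.sub_mem hz hy) (sub_ne_zero.mpr hyz.symm)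
    exact (hammingDist_lt_add_iff x y z).mpr
      ⟨i, sub_ne_zero.mp h1, (sub_ne_zero.mp h2).symm⟩
end

section
/- The asymptotic maximal achievable rate for linear intersecting codes over the field F₁₂₁ with 121 elements satisfies R₁₂₁ ≥ 9/20. -/
/-!
The codes are evaluation codes on the Garcia–Stichtenoth tower over `K = 𝔽_{q²}`, `q = 11`. With
`T(z) = z^q + z`, level `n` of the tower has coordinates `x_0, …, x_n` subject to
`T(x_{i+1}) T(x_i) = x_i^(q+1)`; write `p = T(x_0)`. Above each of the `q² - q` constants `α` with
`T(α) ≠ 0` the tower splits completely, which gives `N = (q² - q) q^n` rational points. The pole of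
`x_0` is totally ramified, so at infinity the pole order of a function is measured in powers of
`γ = v(x_n)`, and `v(x_0) = γ^(q^n)`.

Instead of Riemann–Roch and a genus computation, the argument uses explicit function spaces and
evaluates functions at points with values in an algebraically closed field `L ⊇ K(X)`, in
particular at the generic points, where `x_0 = X`.

* `exists_mem_pow`: the space `Mem` of polynomials in `x_0` and in the modified coordinates
  `x_{i+1} - b_i`, of degree less than `q` in the latter, contains for each `d` a function `m_d`
  with `v(m_d) = γ^d` at infinity.
* `Mem.inI`: the functions `p m`, `m ∈ Mem`, are integral at all places where `x_0` is finite and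
  vanish at the zeros of `p`. This is the local analysis: above a zero of `p` where `x_l` is the
  first coordinate that is a unit, the pole of `x_{l+k+1}` agrees with that of
  `-x_l² / x_{l-k-1}` (`Loc.approx`), which is what `b_i` removes, and from level `2l` on the
  extension is totally ramified, so that poles stay smaller than the zero of `p`.
* `Rep.ge_of_inI`: a regular function with this integrality and vanishing property is zero or has
  `v ≥ v(p)` at infinity.
* `Rep.exists_div`: a regular function that vanishes at all rational points is divisible by
  `h(x_0) = ∏ (x_0 - α)`, which is a unit at the zeros of `p`.

The code consists of the evaluations of `∑_{d ≤ D} c_d p m_d`. If the product of two nonzero such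
functions vanished at all rational points, dividing by `h(x_0)` would give a nonzero function with
the integrality property and `v ≤ γ^(2 (q^(n+1) + D) - (q² - q) q^n)` at infinity. This is less than
`v(p) = γ^(q^(n+1))` as soon as `2 (q^(n+1) + D) < q^(n+2)`, a contradiction. Thus the code is
intersecting of dimension `D + 1` (`exists_code`), and for `q = 11` the best `D` gives
`D + 1 ≥ 9 · 11^(n+1) / 2` at length `10 · 11^(n+1)`.
-/

/-- A linear code `C ⊆ Fⁿ` is intersecting if any two nonzero codewords have
intersecting supports. -/
def IsLinIntersecting {F : Type*} [Field F] {n : ℕ} (C : Submodule F (Fin n → F)) : Prop :=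
  ∀ c ∈ C, c ≠ 0 → ∀ c' ∈ C, c' ≠ 0 → ∃ i : Fin n, c i ≠ 0 ∧ c' i ≠ 0

/-- The maximum dimension of a linear intersecting code of length `n` over `F`. -/
noncomputable def maxIntersectingDim (F : Type*) [Field F] (n : ℕ) : ℕ :=
  sSup {k : ℕ | ∃ C : Submodule F (Fin n → F), IsLinIntersecting C ∧ Module.finrank F C = k}

/-- `R_q`: the asymptotic maximal achievable rate for linear intersecting codes over `F`. -/
noncomputable def Rq (F : Type*) [Field F] : ℝ :=
  Filter.limsup (fun n : ℕ => (maxIntersectingDim F n : ℝ) / n) Filter.atTop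

namespace IntersectingTower

/-! ### The additive polynomial `T` and points of the tower -/

section Points

variable {L : Type*} [Field L] (q : ℕ)

/-- The additive polynomial `T(z) = z ^ q + z`, the trace from `𝔽_{q²}` to `𝔽_q`. -/
def T (z : L) : L := z ^ q + z

/-- Points of the `n`-th level of the tower. A point is encoded as a sequence of which only the
coordinates `0, …, n` matter; consecutive ones satisfy `T(x_{i+1}) T(x_i) = x_i ^ (q+1)`. -/
def Pt (n : ℕ) (x : ℕ → L) : Prop :=
  T q (x 0) ≠ 0 ∧ ∀ i < n, T q (x (i + 1)) * T q (x i) = x i ^ (q + 1)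

/-- Generic points: points whose zeroth coordinate is a given element `X`, which later is
transcendental over the constants. -/
def Gen (X : L) (n : ℕ) (x : ℕ → L) : Prop := Pt q n x ∧ x 0 = X

variable {q}

lemma Pt.mono {m n : ℕ} (h : m ≤ n) {x : ℕ → L} (hx : Pt q n x) : Pt q m x :=
  ⟨hx.1, fun i hi => hx.2 i (hi.trans_le h)⟩

lemma Gen.mono {X : L} {m n : ℕ} (h : m ≤ n) {x : ℕ → L} (hx : Gen q X n x) : Gen q X m x :=
  ⟨hx.1.mono h, hx.2⟩

lemma Pt.congr {n : ℕ} {x x' : ℕ → L} (hx : Pt q n x) (h : ∀ i ≤ n, x' i = x i) : Pt q n x' := by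
  refine ⟨by rw [h 0 (Nat.zero_le _)]; exact hx.1, fun i hi => ?_⟩
  rw [h i hi.le, h (i + 1) hi]
  exact hx.2 i hi

variable [hqp : Fact q.Prime]

lemma T_zero : T q (0 : L) = 0 := by simp [T, hqp.out.ne_zero]

lemma ne_zero_of_T {z : L} (h : T q z ≠ 0) : z ≠ 0 := by
  rintro rfl
  exact h T_zero

/-- The factorisation `T(z) = z (z^(q-1) + 1)`. -/
lemma T_eq_mul (z : L) : T q z = z * (z ^ (q - 1) + 1) := by
  obtain ⟨k, hk⟩ : ∃ k, q = k + 1 := ⟨q - 1, by have := hqp.out.one_lt; omega⟩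
  simp only [T, hk, Nat.add_sub_cancel]
  ring

lemma Pt.T_ne {n : ℕ} {x : ℕ → L} (hx : Pt q n x) : ∀ i ≤ n, T q (x i) ≠ 0
  | 0, _ => hx.1
  | i + 1, hi => by
    have h1 := hx.T_ne i (by omega)
    have h2 := hx.2 i hi
    intro h
    rw [h, zero_mul] at h2
    exact ne_zero_of_T h1 (pow_eq_zero_iff (by omega) |>.1 h2.symm)

lemma Pt.ne {n : ℕ} {x : ℕ → L} (hx : Pt q n x) (i : ℕ) (hi : i ≤ n) : x i ≠ 0 :=
  ne_zero_of_T (hx.T_ne i hi)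

lemma Pt.T_succ {n : ℕ} {x : ℕ → L} (hx : Pt q n x) (i : ℕ) (hi : i < n) :
    T q (x (i + 1)) = x i ^ (q + 1) / T q (x i) := by
  rw [eq_div_iff (hx.T_ne i hi.le)]
  exact hx.2 i hi

lemma Pt.extend {n : ℕ} {x : ℕ → L} (hx : Pt q n x) {y : L}
    (hy : T q y = x n ^ (q + 1) / T q (x n)) : Pt q (n + 1) (Function.update x (n + 1) y) := by
  have h : ∀ i ≤ n, Function.update x (n + 1) y i = x i := fun i hi =>
    Function.update_of_ne (by omega) _ _
  refine ⟨(hx.congr h).1, fun i hi => ?_⟩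
  rcases Nat.lt_succ_iff_lt_or_eq.1 hi with h' | rfl
  · exact (hx.congr h).2 i h'
  · rw [Function.update_self, h i le_rfl, hy, div_mul_cancel₀ _ (hx.T_ne i le_rfl)]

lemma Gen.extend {X : L} {n : ℕ} {x : ℕ → L} (hx : Gen q X n x) {y : L}
    (hy : T q y = x n ^ (q + 1) / T q (x n)) :
    Gen q X (n + 1) (Function.update x (n + 1) y) :=
  ⟨hx.1.extend hy, by rw [Function.update_of_ne (by omega), hx.2]⟩

/-- Over an algebraically closed field every point can be lifted to the next level. -/
lemma exists_T_eq [IsAlgClosed L] (w : L) : ∃ y : L, T q y = w := by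
  have hd : (Polynomial.X ^ q + Polynomial.X - Polynomial.C w : Polynomial L).degree ≠ 0 := by
    have h1 : (Polynomial.X ^ q + (Polynomial.X - Polynomial.C w) : Polynomial L).natDegree = q := by
      have := Polynomial.natDegree_add_eq_left_of_natDegree_lt
        (p := (Polynomial.X ^ q : Polynomial L)) (q := Polynomial.X - Polynomial.C w)
        (by simpa using hqp.out.one_lt)
      simpa using this
    rw [← add_sub_assoc] at h1
    intro h
    have h2 : _ = 0 := Polynomial.natDegree_eq_of_degree_eq_some h
    have := hqp.out.pos
    omega
  obtain ⟨y, hy⟩ := IsAlgClosed.exists_root _ hd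
  refine ⟨y, ?_⟩
  simpa [T, Polynomial.IsRoot, sub_eq_zero] using hy

lemma exists_gen [IsAlgClosed L] {X : L} (hX : T q X ≠ 0) : ∀ n, ∃ x, Gen q X n x
  | 0 => ⟨fun _ => X, ⟨hX, fun i hi => by omega⟩, rfl⟩
  | n + 1 => by
    obtain ⟨x, hx⟩ := exists_gen hX n
    obtain ⟨y, hy⟩ := exists_T_eq (q := q) (x n ^ (q + 1) / T q (x n))
    exact ⟨_, hx.extend hy⟩

/-- In terms of inverses, the equation of the tower reads `1 / T(x_{i+1}) = T(1 / x_i)`. -/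
lemma Pt.T_inv {n : ℕ} {x : ℕ → L} (hx : Pt q n x) (i : ℕ) (hi : i < n) :
    (T q (x (i + 1)))⁻¹ = T q (x i)⁻¹ := by
  have h0 := hx.ne i hi.le
  rw [hx.T_succ i hi, inv_div]
  simp only [T, inv_pow]
  field_simp
  ring

variable [CharP L q]

lemma T_add (a b : L) : T q (a + b) = T q a + T q b := by
  simp only [T, add_pow_char]
  ring

lemma T_neg (a : L) : T q (-a) = -T q a := by
  have h := T_add (q := q) a (-a)
  rw [add_neg_cancel, T_zero] at h
  linear_combination -h

lemma T_sub (a b : L) : T q (a - b) = T q a - T q b := by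
  rw [sub_eq_add_neg, T_add, T_neg, sub_eq_add_neg]

end Points

/-! ### Regular functions and their normal forms -/

section Regular

open Polynomial

variable (K : Type*) {L : Type*} [Field K] [Field L] [Algebra K L] (q : ℕ)

/-- Regular functions on the `n`-th level: the functions generated over the constants by the
coordinates, their inverses and `1 / T(x_0)`, up to equality on points of that level. -/
inductive Rep (n : ℕ) : ((ℕ → L) → L) → Prop
  | const (c : K) : Rep n fun _ => algebraMap K L c
  | coord (i : ℕ) (hi : i ≤ n) : Rep n fun x => x i
  | inv (i : ℕ) (hi : i ≤ n) : Rep n fun x => (x i)⁻¹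
  | invT : Rep n fun x => (T q (x 0))⁻¹
  | add {f g : (ℕ → L) → L} : Rep n f → Rep n g → Rep n fun x => f x + g x
  | mul {f g : (ℕ → L) → L} : Rep n f → Rep n g → Rep n fun x => f x * g x
  | congr {f g : (ℕ → L) → L} : Rep n f → (∀ x, Pt q n x → g x = f x) → Rep n g

variable {K q}

lemma Rep.mono {m n : ℕ} (h : m ≤ n) {f : (ℕ → L) → L} (hf : Rep K q m f) : Rep K q n f := by
  induction hf with
  | const c => exact .const c
  | coord i hi => exact .coord i (hi.trans h)
  | inv i hi => exact .inv i (hi.trans h)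
  | invT => exact .invT
  | add _ _ ih1 ih2 => exact ih1.add ih2
  | mul _ _ ih1 ih2 => exact ih1.mul ih2
  | congr _ hc ih => exact ih.congr fun x hx => hc x (hx.mono h)

lemma Rep.eq_of_eq {n : ℕ} {f : (ℕ → L) → L} (hf : Rep K q n f) {x x' : ℕ → L} (hx : Pt q n x)
    (h : ∀ i ≤ n, x' i = x i) : f x' = f x := by
  induction hf with
  | const c => rfl
  | coord i hi => exact h i hi
  | inv i hi => simp only [h i hi]
  | invT => simp only [h 0 (Nat.zero_le _)]
  | add _ _ ih1 ih2 => simp only [ih1, ih2]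
  | mul _ _ ih1 ih2 => simp only [ih1, ih2]
  | congr _ hc ih => rw [hc x hx, hc x' (hx.congr h), ih]

/-- Regular functions take constant values at rational points. -/
lemma Rep.mem_range {n : ℕ} {f : (ℕ → L) → L} (hf : Rep K q n f) {x : ℕ → L} (hx : Pt q n x)
    (h : ∀ i ≤ n, x i ∈ (algebraMap K L).range) : f x ∈ (algebraMap K L).fieldRange := by
  have h' : ∀ i ≤ n, x i ∈ (algebraMap K L).fieldRange := h
  induction hf with
  | const c => exact ⟨c, rfl⟩
  | coord i hi => exact h' i hi
  | inv i hi => exact inv_mem (h' i hi)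
  | invT => exact inv_mem (add_mem (pow_mem (h' 0 (Nat.zero_le _)) _) (h' 0 (Nat.zero_le _)))
  | add _ _ ih1 ih2 => exact add_mem ih1 ih2
  | mul _ _ ih1 ih2 => exact mul_mem ih1 ih2
  | congr _ hc ih => rw [hc x hx]; exact ih

lemma Rep.zero {n : ℕ} : Rep K q n fun _ : ℕ → L => (0 : L) := by
  simpa using (Rep.const (L := L) (q := q) (n := n) (0 : K))

lemma Rep.one {n : ℕ} : Rep K q n fun _ : ℕ → L => (1 : L) := by
  simpa using (Rep.const (L := L) (q := q) (n := n) (1 : K))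

lemma Rep.smul {n : ℕ} {f : (ℕ → L) → L} (c : K) (hf : Rep K q n f) :
    Rep K q n fun x => algebraMap K L c * f x := (Rep.const c).mul hf

lemma Rep.neg {n : ℕ} {f : (ℕ → L) → L} (hf : Rep K q n f) : Rep K q n fun x => -f x :=
  (hf.smul (-1)).congr fun x _ => by simp

lemma Rep.sub {n : ℕ} {f g : (ℕ → L) → L} (hf : Rep K q n f) (hg : Rep K q n g) :
    Rep K q n fun x => f x - g x := (hf.add hg.neg).congr fun _ _ => sub_eq_add_neg _ _

lemma Rep.pow {n : ℕ} {f : (ℕ → L) → L} (hf : Rep K q n f) (k : ℕ) :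
    Rep K q n fun x => f x ^ k := by
  induction k with
  | zero => simpa using Rep.one
  | succ k ih => simpa only [pow_succ] using ih.mul hf

lemma Rep.sum {ι : Type*} {n : ℕ} (s : Finset ι) {f : ι → (ℕ → L) → L}
    (hf : ∀ i ∈ s, Rep K q n (f i)) : Rep K q n fun x => ∑ i ∈ s, f i x := by
  classical
  induction s using Finset.induction_on with
  | empty => simpa using Rep.zero
  | insert a s ha ih =>
    simp only [Finset.sum_insert ha]
    exact (hf a (by simp)).add (ih fun i hi => hf i (by simp [hi]))

lemma Rep.prod {ι : Type*} {n : ℕ} (s : Finset ι) {f : ι → (ℕ → L) → L}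
    (hf : ∀ i ∈ s, Rep K q n (f i)) : Rep K q n fun x => ∏ i ∈ s, f i x := by
  classical
  induction s using Finset.induction_on with
  | empty => simpa using Rep.one
  | insert a s ha ih =>
    simp only [Finset.prod_insert ha]
    exact (hf a (by simp)).mul (ih fun i hi => hf i (by simp [hi]))

lemma Rep.aeval {n : ℕ} (a : K[X]) : Rep K q n fun x : ℕ → L => aeval (x 0) a := by
  simp only [aeval_eq_sum_range, Algebra.smul_def]
  exact Rep.sum _ fun i _ => ((Rep.coord 0 (Nat.zero_le _)).pow i).smul _

lemma Rep.T_comp {n : ℕ} {f : (ℕ → L) → L} (hf : Rep K q n f) : Rep K q n fun x => T q (f x) :=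
  (hf.pow q).add hf

/-- `NF n f`: on points of level `n + 1` the function `f` is a polynomial of degree less than `q`
in the last coordinate, with regular functions of level `n` as coefficients. -/
def NF (K : Type*) {L : Type*} [Field K] [Field L] [Algebra K L] (q n : ℕ)
    (f : (ℕ → L) → L) : Prop :=
  ∃ g : ℕ → (ℕ → L) → L, (∀ l, Rep K q n (g l)) ∧
    ∀ x, Pt q (n + 1) x → f x = ∑ l ∈ Finset.range q, g l x * x (n + 1) ^ l

lemma NF.congr {n : ℕ} {f g : (ℕ → L) → L} (hf : NF K q n f)
    (h : ∀ x, Pt q (n + 1) x → g x = f x) : NF K q n g := by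
  obtain ⟨a, ha, h1⟩ := hf
  exact ⟨a, ha, fun x hx => by rw [h x hx, h1 x hx]⟩

lemma NF.add {n : ℕ} {f g : (ℕ → L) → L} (hf : NF K q n f) (hg : NF K q n g) :
    NF K q n fun x => f x + g x := by
  obtain ⟨a, ha, h1⟩ := hf
  obtain ⟨b, hb, h2⟩ := hg
  refine ⟨fun l x => a l x + b l x, fun l => (ha l).add (hb l), fun x hx => ?_⟩
  simp only [h1 x hx, h2 x hx, add_mul, Finset.sum_add_distrib]

lemma NF.lift_mul {n : ℕ} {f g : (ℕ → L) → L} (hf : Rep K q n f) (hg : NF K q n g) :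
    NF K q n fun x => f x * g x := by
  obtain ⟨b, hb, h2⟩ := hg
  refine ⟨fun l x => f x * b l x, fun l => hf.mul (hb l), fun x hx => ?_⟩
  simp only [h2 x hx, Finset.mul_sum, mul_assoc]

variable [hqp : Fact q.Prime]

lemma Rep.invT_coord {n : ℕ} : ∀ i ≤ n, Rep K q n fun x : ℕ → L => (T q (x i))⁻¹
  | 0, _ => .invT
  | i + 1, hi => ((Rep.inv i (by omega)).T_comp).congr fun x hx => hx.T_inv i hi

/-- The right-hand side `w = x_n^(q+1) / T(x_n)` of the equation `T(x_{n+1}) = w`. -/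
lemma Rep.w {n : ℕ} : Rep K q n fun x : ℕ → L => x n ^ (q + 1) / T q (x n) := by
  simp only [div_eq_mul_inv]
  exact ((Rep.coord n le_rfl).pow _).mul (Rep.invT_coord n le_rfl)

/-- Normal form at the bottom of the tower. -/
theorem Rep.normal_zero {f : (ℕ → L) → L} (hf : Rep K q 0 f) :
    ∃ (a : K[X]) (s : ℕ), ∀ x, Pt q 0 x → f x = Polynomial.aeval (x 0) a / T q (x 0) ^ s := by
  induction hf with
  | const c => exact ⟨C c, 0, fun x _ => by simp⟩
  | coord i hi => exact ⟨X, 0, fun x _ => by simp [Nat.le_zero.1 hi]⟩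
  | inv i hi =>
    refine ⟨X ^ (q - 1) + 1, 1, fun x hx => ?_⟩
    have h := hx.T_ne 0 le_rfl
    have h' := hx.ne 0 le_rfl
    rw [Nat.le_zero.1 hi, pow_one, eq_div_iff h, T_eq_mul, inv_mul_cancel_left₀ h']
    simp
  | invT => exact ⟨1, 1, fun x _ => by simp⟩
  | add _ _ ih1 ih2 =>
    obtain ⟨a, s, h1⟩ := ih1
    obtain ⟨b, t, h2⟩ := ih2
    refine ⟨a * (X ^ q + X) ^ t + b * (X ^ q + X) ^ s, s + t, fun x hx => ?_⟩
    have h := hx.T_ne 0 le_rfl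
    have hT : Polynomial.aeval (x 0) (X ^ q + X : K[X]) = T q (x 0) := by simp [T]
    simp only [h1 x hx, h2 x hx]
    rw [div_add_div _ _ (pow_ne_zero _ h) (pow_ne_zero _ h), map_add, map_mul,
      map_mul, map_pow, map_pow, hT, pow_add, mul_comm (T q (x 0) ^ s) (Polynomial.aeval _ b)]
  | mul _ _ ih1 ih2 =>
    obtain ⟨a, s, h1⟩ := ih1
    obtain ⟨b, t, h2⟩ := ih2
    exact ⟨a * b, s + t, fun x hx => by
      simp only [h1 x hx, h2 x hx, map_mul, pow_add, div_mul_div_comm]⟩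
  | congr _ hc ih =>
    obtain ⟨a, s, h1⟩ := ih
    exact ⟨a, s, fun x hx => by rw [hc x hx, h1 x hx]⟩

lemma NF.lift {n : ℕ} {f : (ℕ → L) → L} (hf : Rep K q n f) : NF K q n f := by
  refine ⟨fun l x => if l = 0 then f x else 0, fun l => ?_, fun x hx => ?_⟩
  · by_cases h : l = 0
    · simpa [h] using hf
    · simpa [h] using Rep.zero
  · simp [hqp.out.pos]

/-- Normal forms are stable under multiplication by the last coordinate `y`, by
`y ^ q = w - y`. -/
lemma NF.mul_coord {n : ℕ} {f : (ℕ → L) → L} (hf : NF K q n f) :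
    NF K q n fun x => f x * x (n + 1) := by
  obtain ⟨a, ha, h1⟩ := hf
  obtain ⟨k, hk⟩ : ∃ k, q = k + 2 := ⟨q - 2, by have := hqp.out.two_le; omega⟩
  refine ⟨fun l x => if l = 0 then a (q - 1) x * (x n ^ (q + 1) / T q (x n)) else
    if l = 1 then a 0 x - a (q - 1) x else a (l - 1) x, fun l => ?_, fun x hx => ?_⟩
  · rcases l with _ | _ | l
    · simpa using (ha (q - 1)).mul Rep.w
    · simpa using (ha 0).sub (ha (q - 1))
    · simpa using ha (l + 1)
  · have h := hx.T_succ n (Nat.lt_succ_self n)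
    beta_reduce
    rw [h1 x hx, ← h]
    have e1 : ∑ l ∈ Finset.range q, a l x * x (n + 1) ^ l
        = ∑ l ∈ Finset.range k, a (l + 1) x * x (n + 1) ^ (l + 1) + a 0 x
          + a (q - 1) x * x (n + 1) ^ (q - 1) := by
      rw [show q - 1 = k + 1 by omega, hk, Finset.sum_range_succ, Finset.sum_range_succ']
      simp
    have e2 : x (n + 1) ^ (q - 1) * x (n + 1) = T q (x (n + 1)) - x (n + 1) := by
      rw [← pow_succ, Nat.sub_add_cancel hqp.out.one_le, T]; ring
    have e3 : Finset.range q = Finset.range (k + 1 + 1) := by rw [hk]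
    rw [e1, e3, Finset.sum_range_succ', Finset.sum_range_succ']
    simp only [Nat.add_sub_cancel, if_true, zero_add, pow_zero,
      mul_one, pow_one, Nat.succ_ne_zero, if_false]
    rw [add_mul, add_mul, mul_assoc (a (q - 1) x), e2, Finset.sum_mul]
    simp only [show ∀ l : ℕ, l + 1 + 1 ≠ 1 by intro l; omega, if_false, pow_succ]
    simp only [mul_assoc]
    ring

lemma NF.mul {n : ℕ} {f g : (ℕ → L) → L} (hf : NF K q n f) (hg : NF K q n g) :
    NF K q n fun x => f x * g x := by
  have hpow : ∀ l : ℕ, NF K q n fun x => g x * x (n + 1) ^ l := by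
    intro l
    induction l with
    | zero => simpa using hg
    | succ l ih => exact ih.mul_coord.congr fun x _ => by ring
  obtain ⟨a, ha, h1⟩ := hf
  have : ∀ N : ℕ, NF K q n fun x => ∑ l ∈ Finset.range N, a l x * (g x * x (n + 1) ^ l) := by
    intro N
    induction N with
    | zero => simpa using NF.lift Rep.zero
    | succ N ih =>
      exact (ih.add (NF.lift_mul (ha N) (hpow N))).congr fun x _ => Finset.sum_range_succ _ _
  refine (this q).congr fun x hx => ?_
  rw [h1 x hx, Finset.sum_mul]
  exact Finset.sum_congr rfl fun l _ => by ring

/-- Normal form on higher levels of the tower. -/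
theorem Rep.normal_succ {n : ℕ} {f : (ℕ → L) → L} (hf : Rep K q (n + 1) f) : NF K q n f := by
  have hy : NF K q n fun x : ℕ → L => x (n + 1) :=
    ((NF.lift (K := K) Rep.one).mul_coord).congr fun x _ => (one_mul _).symm
  have hyp : ∀ k : ℕ, NF K q n fun x : ℕ → L => x (n + 1) ^ k := by
    intro k
    induction k with
    | zero => simpa using NF.lift Rep.one
    | succ k ih => simpa only [pow_succ] using ih.mul_coord
  induction hf with
  | const c => exact NF.lift (.const c)
  | coord i hi =>
    rcases Nat.le_succ_iff.1 hi with h | rfl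
    · exact NF.lift (.coord i h)
    · exact hy
  | inv i hi =>
    rcases Nat.le_succ_iff.1 hi with h | rfl
    · exact NF.lift (.inv i h)
    · -- `1 / y = (y^(q-1) + 1) / T(y)` and `1 / T(y) = T(1 / x_n)`
      have h1 : NF K q n fun x : ℕ → L => T q (x n)⁻¹ := NF.lift (Rep.inv n le_rfl).T_comp
      refine (((hyp (q - 1)).add (NF.lift Rep.one)).mul h1).congr fun x hx => ?_
      have h := hx.T_ne (n + 1) le_rfl
      have h' := hx.ne (n + 1) le_rfl
      rw [← hx.T_inv n (Nat.lt_succ_self n), ← div_eq_mul_inv, eq_div_iff h, T_eq_mul,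
        inv_mul_cancel_left₀ h']
  | invT => exact NF.lift .invT
  | add _ _ ih1 ih2 => exact ih1.add ih2
  | mul _ _ ih1 ih2 => exact ih1.mul ih2
  | congr _ hc ih => exact ih.congr hc

end Regular

/-! ### Rational points -/

section Rational

open Polynomial
open scoped Classical

variable {K L : Type*} [Field K] [Field L] [Algebra K L] {q : ℕ}

/-- The coordinates `0, …, n` are constants. -/
def IsRat (K : Type*) {L : Type*} [Field K] [Field L] [Algebra K L] (n : ℕ) (x : ℕ → L) : Prop :=
  ∀ i ≤ n, x i ∈ (algebraMap K L).range

lemma T_algebraMap (z : K) : T q (algebraMap K L z) = algebraMap K L (T q z) := by simp [T]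

lemma IsRat.extend {n : ℕ} {x : ℕ → L} (hx : IsRat K n x) (y : K) :
    IsRat K (n + 1) (Function.update x (n + 1) (algebraMap K L y)) := by
  intro i hi
  rcases Nat.le_succ_iff.1 hi with h | rfl
  · rw [Function.update_of_ne (by omega)]
    exact hx i h
  · rw [Function.update_self]
    exact ⟨y, rfl⟩

variable [hqp : Fact q.Prime]

lemma natDegree_pow_add (a : K[X]) (ha : a.natDegree ≤ 1) : (X ^ q + a).natDegree = q := by
  rw [natDegree_add_eq_left_of_natDegree_lt] <;> rw [natDegree_X_pow]
  exact ha.trans_lt hqp.out.one_lt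

variable [Fintype K]

lemma card_roots_le (p : K[X]) (hp : p ≠ 0) :
    (Finset.univ.filter fun z : K => p.eval z = 0).card ≤ p.natDegree := by
  refine le_trans (Finset.card_le_card fun z hz => ?_) ((Multiset.toFinset_card_le _).trans
    (card_roots' p))
  simpa [hp] using hz

lemma card_fiber_le (a : K[X]) (ha : a.natDegree ≤ 1) :
    (Finset.univ.filter fun z : K => z ^ q + a.eval z = 0).card ≤ q := by
  have h1 := natDegree_pow_add (q := q) a ha
  have h2 : (X ^ q + a : K[X]) ≠ 0 := by
    intro h
    rw [h, natDegree_zero] at h1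
    exact hqp.out.ne_zero h1.symm
  simpa [h1] using card_roots_le _ h2

/-- The polynomial whose roots are the zeroth coordinates of the rational points. -/
noncomputable def hpoly (K : Type*) [Field K] [Fintype K] (q : ℕ) : K[X] :=
  ∏ α ∈ Finset.univ.filter (fun z : K => T q z ≠ 0), (X - C α)

variable [CharP K q] (hK : Fintype.card K = q ^ 2)

include hK

lemma T_pow_eq (z : K) : T q z ^ q = T q z := by
  have : z ^ (q ^ 2) = z := hK ▸ FiniteField.pow_card z
  simp only [T, add_pow_char, ← pow_mul, ← sq, this]
  ring

/-- Over `𝔽_{q²}`, each element of `𝔽_q` has exactly `q` preimages under `T`. -/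
lemma card_fiber (t : K) (ht : t ^ q = t) :
    (Finset.univ.filter fun z : K => T q z = t).card = q := by
  have hle : ∀ s : K, (Finset.univ.filter fun z : K => T q z = s).card ≤ q := by
    intro s
    have := card_fiber_le (q := q) (X - C s) (by simp)
    refine le_trans (Finset.card_le_card fun z hz => ?_) this
    have hz' : T q z = s := (Finset.mem_filter.1 hz).2
    simpa [T, sub_eq_zero, ← add_sub_assoc] using hz'
  have hfix : (Finset.univ.filter fun z : K => z ^ q = z).card ≤ q := by
    have := card_fiber_le (q := q) (-X : K[X]) (by simp)
    simpa [← sub_eq_add_neg, sub_eq_zero] using this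
  by_contra hne
  have h1 := Finset.card_eq_sum_card_fiberwise (s := (Finset.univ : Finset K))
    (t := Finset.univ.filter fun z : K => z ^ q = z) (f := T q)
    (fun z _ => by simpa using T_pow_eq hK z)
  have h2 : ∑ s ∈ Finset.univ.filter (fun z : K => z ^ q = z),
      (Finset.univ.filter fun z : K => T q z = s).card
      < ∑ s ∈ Finset.univ.filter (fun z : K => z ^ q = z), q :=
    Finset.sum_lt_sum (fun s _ => hle s) ⟨t, by simpa using ht, lt_of_le_of_ne (hle t) hne⟩
  rw [← h1, Finset.card_univ, hK, Finset.sum_const, smul_eq_mul] at h2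
  nlinarith [hqp.out.pos]

lemma card_ker : (Finset.univ.filter fun z : K => T q z = 0).card = q :=
  card_fiber hK 0 (by simp [hqp.out.ne_zero])

lemma card_omega : (Finset.univ.filter fun z : K => T q z ≠ 0).card = q ^ 2 - q := by
  have h := Finset.card_filter_add_card_filter_not (s := (Finset.univ : Finset K))
    (fun z : K => T q z = 0)
  rw [card_ker hK, Finset.card_univ, hK] at h
  simp only [ne_eq]
  omega

/-- At a rational point the next equation is `T(y) = t` with `t ∈ 𝔽_q`. -/
lemma exists_fiber {n : ℕ} {x : ℕ → L} (hr : IsRat K n x) :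
    ∃ t : K, t ^ q = t ∧ algebraMap K L t = x n ^ (q + 1) / T q (x n) := by
  obtain ⟨z, hz⟩ := hr n le_rfl
  refine ⟨z ^ (q + 1) / T q z, ?_, ?_⟩
  · have : z ^ (q ^ 2) = z := hK ▸ FiniteField.pow_card z
    rw [div_pow, T_pow_eq hK, ← pow_mul, add_mul, one_mul, pow_add, ← sq, this, pow_succ, mul_comm]
  · rw [← hz, T_algebraMap]
    simp

/-- A list of points of level `n` that exhausts all rational points. -/
lemma exists_enum (n : ℕ) : ∃ pt : Fin ((q ^ 2 - q) * q ^ n) → ℕ → L,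
    (∀ i, Pt q n (pt i) ∧ IsRat K n (pt i)) ∧
    ∀ x, Pt q n x → IsRat K n x → ∃ i, ∀ j ≤ n, x j = pt i j := by
  induction n with
  | zero =>
    rw [pow_zero, mul_one, ← card_omega hK]
    let e := (Finset.univ.filter fun z : K => T q z ≠ 0).equivFin.symm
    refine ⟨fun i _ => algebraMap K L (e i), fun i => ⟨⟨?_, fun i hi => by omega⟩,
      fun _ _ => ⟨_, rfl⟩⟩, fun x hx hr => ?_⟩
    · have := (Finset.mem_filter.1 (e i).2).2
      rw [T_algebraMap]
      simpa using this
    · obtain ⟨z, hz⟩ := hr 0 le_rfl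
      have h0 := hx.1
      rw [← hz, T_algebraMap] at h0
      have hz' : z ∈ Finset.univ.filter fun z : K => T q z ≠ 0 := by
        simp only [Finset.mem_filter, Finset.mem_univ, true_and]
        intro h
        exact h0 (by rw [h, map_zero])
      refine ⟨e.symm ⟨z, hz'⟩, fun j hj => ?_⟩
      simp only [Nat.le_zero.1 hj, Equiv.apply_symm_apply, hz]
  | succ n ih =>
    obtain ⟨pt, h1, h2⟩ := ih
    choose t ht htw using fun i => exists_fiber hK (h1 i).2
    have e : ∀ i, ∃ e : Fin q → K, ∀ y, T q y = t i ↔ ∃ j, e j = y := by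
      intro i
      have e := ((Finset.univ.filter fun z : K => T q z = t i).equivFinOfCardEq
        (card_fiber hK (t i) (ht i))).symm
      refine ⟨fun j => e j, fun y => ⟨fun hy => ⟨e.symm ⟨y, by simpa using hy⟩, by simp⟩, ?_⟩⟩
      rintro ⟨j, rfl⟩
      exact (Finset.mem_filter.1 (e j).2).2
    choose e he using e
    have key : ∀ i j, Pt q (n + 1) (Function.update (pt i) (n + 1) (algebraMap K L (e i j))) ∧
        IsRat K (n + 1) (Function.update (pt i) (n + 1) (algebraMap K L (e i j))) := by
      refine fun i j => ⟨(h1 i).1.extend ?_, (h1 i).2.extend _⟩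
      rw [T_algebraMap, (he i _).2 ⟨j, rfl⟩, htw]
    rw [pow_succ _ n, ← mul_assoc]
    refine ⟨fun k => Function.update (pt (finProdFinEquiv.symm k).1) (n + 1)
      (algebraMap K L (e (finProdFinEquiv.symm k).1 (finProdFinEquiv.symm k).2)),
      fun k => key _ _, fun x hx hr => ?_⟩
    obtain ⟨i, hi⟩ := h2 x (hx.mono (Nat.le_succ n)) fun j hj => hr j (hj.trans (Nat.le_succ n))
    obtain ⟨y, hy⟩ := hr (n + 1) le_rfl
    have hT := hx.T_succ n (Nat.lt_succ_self n)
    rw [hi n le_rfl, ← htw, ← hy, T_algebraMap] at hT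
    obtain ⟨j, hj⟩ := (he i y).1 ((algebraMap K L).injective hT)
    refine ⟨finProdFinEquiv (i, j), fun k hk => ?_⟩
    simp only [Equiv.symm_apply_apply]
    rcases Nat.le_succ_iff.1 hk with h | rfl
    · rw [Function.update_of_ne (by omega), hi k h]
    · rw [Function.update_self, hj, hy]

/-- A regular function vanishing at all rational points is divisible by `hpoly`. -/
theorem Rep.exists_div {n : ℕ} {f : (ℕ → L) → L} (hf : Rep K q n f)
    (h0 : ∀ x, Pt q n x → IsRat K n x → f x = 0) :
    ∃ u, Rep K q n u ∧ ∀ x, Pt q n x → f x = Polynomial.aeval (x 0) (hpoly K q) * u x := by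
  induction n generalizing f with
  | zero =>
    obtain ⟨a, s, ha⟩ := hf.normal_zero
    have hdvd : hpoly K q ∣ a := by
      refine Finset.prod_dvd_of_coprime (fun α _ β _ hne => isCoprime_X_sub_C_of_isUnit_sub
        (sub_ne_zero.2 hne).isUnit) fun α hα => ?_
      have hT : T q α ≠ 0 := (Finset.mem_filter.1 hα).2
      have hT' : T q (algebraMap K L α) ≠ 0 := by
        rw [T_algebraMap]; simpa using hT
      have hp : Pt q 0 (fun _ => algebraMap K L α) := ⟨hT', fun i hi => by omega⟩
      have h := h0 _ hp fun _ _ => ⟨α, rfl⟩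
      rw [ha _ hp, div_eq_zero_iff, or_iff_left (pow_ne_zero _ hT'), aeval_algebraMap_apply,
        map_eq_zero_iff _ (algebraMap K L).injective] at h
      rw [dvd_iff_isRoot]
      simpa using h
    obtain ⟨b, rfl⟩ := hdvd
    refine ⟨_, (Rep.aeval b).mul (Rep.invT.pow s), fun x hx => ?_⟩
    rw [ha x hx, map_mul, div_eq_mul_inv, inv_pow, mul_assoc]
  | succ n ih =>
    obtain ⟨g, hg, hfg⟩ := hf.normal_succ
    have hvan : ∀ l < q, ∀ x, Pt q n x → IsRat K n x → g l x = 0 := by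
      intro l hl x hx hr
      obtain ⟨t, ht, htw⟩ := exists_fiber hK hr
      let P : L[X] := ∑ l ∈ Finset.range q, C (g l x) * X ^ l
      have hP : P = 0 := by
        refine eq_zero_of_degree_lt_of_eval_finset_eq_zero
          ((Finset.univ.filter fun z : K => T q z = t).map ⟨_, (algebraMap K L).injective⟩) ?_ ?_
        · rw [Finset.card_map, card_fiber hK t ht]
          refine (degree_sum_le _ _).trans_lt ?_
          rw [Finset.sup_lt_iff (WithBot.bot_lt_coe _)]
          intro k hk
          exact (degree_C_mul_X_pow_le _ _).trans_lt (by simpa using hk)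
        · intro y hy
          obtain ⟨z, hz, rfl⟩ := Finset.mem_map.1 hy
          have hTz : T q (algebraMap K L z) = x n ^ (q + 1) / T q (x n) := by
            rw [T_algebraMap, (Finset.mem_filter.1 hz).2, htw]
          have h := h0 _ (hx.extend hTz) (hr.extend z)
          rw [hfg _ (hx.extend hTz)] at h
          simp only [P, eval_finsetSum, eval_mul, eval_C, eval_pow, eval_X]
          rw [← h]
          refine Finset.sum_congr rfl fun k _ => ?_
          have hk : g k (Function.update x (n + 1) (algebraMap K L z)) = g k x :=
            (hg k).eq_of_eq hx fun i hi => Function.update_of_ne (by omega) _ _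
          rw [Function.update_self, hk]
          rfl
      have := congrArg (fun p => coeff p l) hP
      simpa [P, finsetSum_coeff, coeff_C_mul, coeff_X_pow, hl] using this
    have : ∀ l, ∃ u, Rep K q n u ∧
        (l < q → ∀ x, Pt q n x → g l x = Polynomial.aeval (x 0) (hpoly K q) * u x) := by
      intro l
      by_cases hl : l < q
      · obtain ⟨u, hu, h⟩ := ih (hg l) (hvan l hl)
        exact ⟨u, hu, fun _ => h⟩
      · exact ⟨_, Rep.zero, fun h => absurd h hl⟩
    choose u hu hgu using this
    refine ⟨fun x => ∑ l ∈ Finset.range q, u l x * x (n + 1) ^ l, Rep.sum _ fun l _ =>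
      ((hu l).mono (Nat.le_succ n)).mul ((Rep.coord _ le_rfl).pow l), fun x hx => ?_⟩
    rw [hfg x hx, Finset.mul_sum]
    refine Finset.sum_congr rfl fun l hl => ?_
    rw [hgu l (Finset.mem_range.1 hl) x (hx.mono (Nat.le_succ n)), mul_assoc]

end Rational

/-! ### Valuations -/

section Valuations

open Polynomial

variable {K L Γ : Type*} [Field K] [Field L] [Algebra K L] {q : ℕ} [hqp : Fact q.Prime]
  [LinearOrderedCommGroupWithZero Γ] (v : Valuation L Γ)

lemma q_sub_one_ne : q - 1 ≠ 0 := by have := hqp.out.one_lt; omega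

lemma pow_pred_mul {M : Type*} [Monoid M] (a : M) : a ^ (q - 1) * a = a ^ q := by
  rw [← pow_succ, Nat.sub_add_cancel hqp.out.one_le]

include hqp in
lemma v_y_of_gt {z : L} (h : 1 < v z) : v (z ^ (q - 1) + 1) = v z ^ (q - 1) := by
  rw [Valuation.map_add_eq_of_lt_left, map_pow]
  rw [map_one, map_pow]
  exact one_lt_pow₀ h q_sub_one_ne

include hqp in
lemma v_y_of_lt {z : L} (h : v z < 1) : v (z ^ (q - 1) + 1) = 1 := by
  rw [Valuation.map_add_eq_of_lt_right, map_one]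
  rw [map_one, map_pow]
  exact pow_lt_one₀ zero_le h q_sub_one_ne

lemma v_T_of_gt {z : L} (h : 1 < v z) : v (T q z) = v z ^ q := by
  rw [T_eq_mul, map_mul, v_y_of_gt v h, mul_comm, pow_pred_mul]

lemma v_T_of_lt {z : L} (h : v z < 1) : v (T q z) = v z := by
  rw [T_eq_mul, map_mul, v_y_of_lt v h, mul_one]

omit hqp in
lemma v_T_le {z : L} (h : v z ≤ 1) : v (T q z) ≤ 1 := by
  refine (v.map_add _ _).trans (max_le ?_ h)
  rw [map_pow]
  exact pow_le_one₀ zero_le h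

lemma v_le_of_T {z : L} (h : v (T q z) ≤ 1) : v z ≤ 1 := by
  by_contra hz
  rw [not_le] at hz
  rw [v_T_of_gt v hz] at h
  exact absurd h (not_le.2 (one_lt_pow₀ hz hqp.out.ne_zero))

lemma v_T_succ {n : ℕ} {x : ℕ → L} (hx : Pt q n x) {i : ℕ} (hi : i < n) :
    v (T q (x (i + 1))) = v (x i) ^ (q + 1) / v (T q (x i)) := by
  rw [hx.T_succ i hi, map_div₀, map_pow]

/-- Above a pole of `x_i` the next coordinate is totally ramified. -/
lemma v_succ_of_gt {n : ℕ} {x : ℕ → L} (hx : Pt q n x) {i : ℕ} (hi : i < n) (h : 1 < v (x i)) :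
    v (x (i + 1)) ^ q = v (x i) ∧ 1 < v (x (i + 1)) := by
  have h1 := v_T_succ v hx hi
  have h0 : v (x i) ≠ 0 := (zero_lt_one.trans h).ne'
  rw [v_T_of_gt v h, pow_succ, mul_div_assoc, mul_div_cancel₀ (v (x i)) (pow_ne_zero q h0)] at h1
  have h2 : 1 < v (x (i + 1)) := by
    by_contra hc
    have := v_T_le (q := q) v (not_lt.1 hc)
    rw [h1] at this
    exact absurd h (not_lt.2 this)
  rw [v_T_of_gt v h2] at h1
  exact ⟨h1, h2⟩

/-- A sum of terms whose nonzero members have distinct valuations has the valuation of its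
largest term. -/
lemma v_sum_of_distinct {ι : Type*} (s : Finset ι) (f : ι → L)
    (hd : ∀ i ∈ s, ∀ j ∈ s, f i ≠ 0 → f j ≠ 0 → v (f i) = v (f j) → i = j) :
    (∀ i ∈ s, f i = 0) ∨
      ∃ j ∈ s, f j ≠ 0 ∧ v (∑ i ∈ s, f i) = v (f j) ∧ ∀ i ∈ s, v (f i) ≤ v (f j) := by
  classical
  by_cases h0 : ∀ i ∈ s, f i = 0
  · exact .inl h0
  · push Not at h0
    obtain ⟨k, hk, hk0⟩ := h0
    obtain ⟨j, hj, hmax⟩ := s.exists_max_image (fun i => v (f i)) ⟨k, hk⟩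
    have hj0 : f j ≠ 0 := by
      intro h
      have := hmax k hk
      rw [h, map_zero, le_zero_iff, map_eq_zero] at this
      exact hk0 this
    refine .inr ⟨j, hj, hj0, v.map_sum_eq_of_lt hj fun i hi => ?_, hmax⟩
    rw [Finset.mem_sdiff, Finset.mem_singleton] at hi
    refine lt_of_le_of_ne (hmax i hi.1) fun he => ?_
    by_cases hi0 : f i = 0
    · rw [hi0, map_zero] at he
      exact hj0 ((map_eq_zero v).1 he.symm)
    · exact hi.2 (hd i hi.1 j hj hi0 hj0 he)

section Constants

variable [Fintype K]

lemma v_const {c : K} (hc : c ≠ 0) : v (algebraMap K L c) = 1 := by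
  have h := FiniteField.pow_card_sub_one_eq_one c hc
  have h2 : v (algebraMap K L c) ^ (Fintype.card K - 1) = 1 := by
    rw [← map_pow, ← map_pow, h, map_one, map_one]
  refine (pow_eq_one_iff_of_nonneg zero_le ?_).1 h2
  have := Fintype.one_lt_card (α := K)
  omega

lemma v_const_le (c : K) : v (algebraMap K L c) ≤ 1 := by
  by_cases hc : c = 0
  · simp [hc]
  · exact (v_const v hc).le

lemma v_aeval_le {X : L} (hX : v X ≤ 1) (a : K[X]) : v (aeval X a) ≤ 1 := by
  rw [aeval_eq_sum_range]
  refine v.map_sum_le fun i _ => ?_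
  rw [Algebra.smul_def, map_mul, map_pow]
  exact mul_le_one' (v_const_le v _) (pow_le_one₀ zero_le hX)

lemma v_aeval_of_gt {X : L} (hX : 1 < v X) {a : K[X]} (ha : a ≠ 0) :
    v (aeval X a) = v X ^ a.natDegree := by
  have key : ∀ i, a.coeff i ≠ 0 → v (a.coeff i • X ^ i) = v X ^ i := fun i hi => by
    rw [Algebra.smul_def, map_mul, map_pow, v_const v hi, one_mul]
  have hl : a.coeff a.natDegree ≠ 0 := leadingCoeff_ne_zero.2 ha
  rw [aeval_eq_sum_range, v.map_sum_eq_of_lt (j := a.natDegree) (by simp), key _ hl]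
  intro i hi
  simp only [Finset.mem_sdiff, Finset.mem_range, Finset.mem_singleton] at hi
  rw [key _ hl]
  by_cases h0 : a.coeff i = 0
  · rw [h0, zero_smul, map_zero]
    exact pow_pos (zero_lt_one.trans hX) _
  · rw [key i h0]
    exact pow_lt_pow_right₀ hX (by omega)

omit [Fintype K] in
/-- Every transcendental element lies in the maximal ideal of some valuation ring. -/
lemma exists_valuationSubring {t : L} (ht : Transcendental K t) :
    ∃ A : ValuationSubring L, A.valuation t < 1 := by
  let R := (Algebra.adjoin K {t}).toSubring
  let t' : R := ⟨t, Algebra.subset_adjoin rfl⟩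
  have hI : Ideal.span {t'} ≠ ⊤ := by
    rw [Ne, Ideal.span_singleton_eq_top, isUnit_iff_exists_inv]
    rintro ⟨⟨b, hb⟩, hb1⟩
    have hb' : b ∈ Algebra.adjoin K {t} := hb
    rw [Algebra.adjoin_singleton_eq_range_aeval] at hb'
    obtain ⟨p, rfl⟩ := hb'
    have h1 : t * aeval t p = 1 := congrArg Subtype.val hb1
    have h2 : aeval t (Polynomial.X * p - 1) = 0 := by
      rw [map_sub, map_mul, aeval_X, map_one]
      exact sub_eq_zero.2 h1
    have h3 := (transcendental_iff.1 ht) _ h2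
    have h4 := congrArg (eval 0) h3
    simp at h4
  obtain ⟨A, -, hA⟩ := Ideal.image_subset_nonunits_valuationSubring _ hI
  exact ⟨A, A.mem_nonunits_iff.1 (hA ⟨t', Ideal.subset_span rfl, rfl⟩)⟩

end Constants

end Valuations

section Infinity

open Polynomial

variable {K L Γ : Type*} [Field K] [Field L] [Algebra K L] {q : ℕ} [hqp : Fact q.Prime]
  [LinearOrderedCommGroupWithZero Γ] (v : Valuation L Γ) [Fintype K] {X : L} (hX : 1 < v X)

include hX

omit [Fintype K] in
lemma v_gt {n : ℕ} {x : ℕ → L} (hx : Gen q X n x) : ∀ i ≤ n, 1 < v (x i)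
  | 0, _ => by rw [hx.2]; exact hX
  | i + 1, hi => (v_succ_of_gt v hx.1 hi (v_gt hx i (by omega))).2

omit [Fintype K] in
lemma v_pow_eq {n : ℕ} {x : ℕ → L} (hx : Gen q X n x) : ∀ i ≤ n, v (x i) ^ (q ^ i) = v X
  | 0, _ => by rw [hx.2, pow_zero, pow_one]
  | i + 1, hi => by
    rw [pow_succ', pow_mul, (v_succ_of_gt v hx.1 hi (v_gt v hX hx i (by omega))).1,
      v_pow_eq hx i (by omega)]

/-- At a pole of `X` a nonzero regular function of level `n` has as valuation a power of that of
the last coordinate. -/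
def VProp (q : ℕ) (X : L) (n : ℕ) (f : (ℕ → L) → L) : Prop :=
  (∀ x, Pt q n x → f x = 0) ∨ ∀ x, Gen q X n x → ∃ m : ℤ, v (f x) = v (x n) ^ m

omit [Fintype K] in
/-- The terms of a normal form have distinct valuations at a pole of `X`. -/
lemma v_terms {n : ℕ} {g : ℕ → (ℕ → L) → L} (hg : ∀ l, VProp v q X n (g l)) {x : ℕ → L}
    (hx : Gen q X (n + 1) x) :
    (∀ l < q, g l x = 0) ∨ ∃ m : ℤ,
      v (∑ l ∈ Finset.range q, g l x * x (n + 1) ^ l) = v (x (n + 1)) ^ m ∧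
      ∀ l < q, v (g l x * x (n + 1) ^ l) ≤ v (∑ l ∈ Finset.range q, g l x * x (n + 1) ^ l) := by
  have hx' := hx.mono (Nat.le_succ n)
  obtain ⟨h1, h2⟩ := v_succ_of_gt v hx.1 (Nat.lt_succ_self n) (v_gt v hX hx n (Nat.le_succ n))
  have h0 : v (x (n + 1)) ≠ 0 := (zero_lt_one.trans h2).ne'
  have hval : ∀ l, g l x * x (n + 1) ^ l ≠ 0 → ∃ m : ℤ,
      v (g l x * x (n + 1) ^ l) = v (x (n + 1)) ^ ((q : ℤ) * m + l) := by
    intro l hl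
    rcases hg l with h | h
    · exact absurd (by rw [h x hx'.1, zero_mul]) hl
    · obtain ⟨m, hm⟩ := h x hx'
      refine ⟨m, ?_⟩
      rw [map_mul, hm, map_pow, ← h1, zpow_add₀ h0, zpow_mul, zpow_natCast, zpow_natCast]
  have hy0 : x (n + 1) ≠ 0 := hx.1.ne _ le_rfl
  have hdist : ∀ i ∈ Finset.range q, ∀ j ∈ Finset.range q, g i x * x (n + 1) ^ i ≠ 0 →
      g j x * x (n + 1) ^ j ≠ 0 →
      v (g i x * x (n + 1) ^ i) = v (g j x * x (n + 1) ^ j) → i = j := by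
    intro i hi j hj hi0 hj0 he
    obtain ⟨m, hm⟩ := hval i hi0
    obtain ⟨m', hm'⟩ := hval j hj0
    simp only [hm, hm'] at he
    have he' := zpow_right_injective₀ (zero_lt_one.trans h2) h2.ne' he
    have hi' := Finset.mem_range.1 hi
    have hj' := Finset.mem_range.1 hj
    have e1 : ((q : ℤ) * m + i) % q = i := by
      rw [Int.mul_add_emod_self_left]; exact Int.emod_eq_of_lt (by omega) (by omega)
    have e2 : ((q : ℤ) * m' + j) % q = j := by
      rw [Int.mul_add_emod_self_left]; exact Int.emod_eq_of_lt (by omega) (by omega)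
    beta_reduce at he'
    rw [he', e2] at e1
    exact_mod_cast e1.symm
  rcases v_sum_of_distinct v (Finset.range q) (fun l => g l x * x (n + 1) ^ l) hdist with h | h
  · left
    intro l hl
    exact (mul_eq_zero.1 (h l (Finset.mem_range.2 hl))).resolve_right (pow_ne_zero _ hy0)
  · right
    obtain ⟨j, hj, hj0, hs, hmax⟩ := h
    obtain ⟨m, hm⟩ := hval j hj0
    refine ⟨_, hs.trans hm, fun l hl => ?_⟩
    rw [hs]
    exact hmax l (Finset.mem_range.2 hl)

theorem Rep.vprop {n : ℕ} {f : (ℕ → L) → L} (hf : Rep K q n f) : VProp v q X n f := by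
  induction n generalizing f with
  | zero =>
    obtain ⟨a, s, ha⟩ := hf.normal_zero
    by_cases h0 : a = 0
    · left
      intro x hx
      rw [ha x hx, h0, map_zero, zero_div]
    · right
      intro x hx
      refine ⟨(a.natDegree : ℤ) - q * s, ?_⟩
      rw [ha x hx.1, map_div₀, hx.2, v_aeval_of_gt v hX h0, map_pow, v_T_of_gt v hX,
        zpow_sub₀ (zero_lt_one.trans hX).ne', zpow_natCast, zpow_mul, zpow_natCast, zpow_natCast]
  | succ n ih =>
    obtain ⟨g, hg, hfg⟩ := hf.normal_succ
    by_cases h0 : ∀ l < q, ∀ x, Pt q n x → g l x = 0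
    · left
      intro x hx
      rw [hfg x hx]
      refine Finset.sum_eq_zero fun l hl => ?_
      rw [h0 l (Finset.mem_range.1 hl) x (hx.mono (Nat.le_succ n)), zero_mul]
    · right
      push Not at h0
      obtain ⟨l, hl, x', hx', hne⟩ := h0
      intro x hx
      rw [hfg x hx.1]
      rcases v_terms v hX (fun l => ih (hg l)) hx with h | ⟨m, hm, -⟩
      · exfalso
        rcases ih (hg l) with h1 | h1
        · exact hne (h1 x' hx')
        · obtain ⟨m, hm⟩ := h1 x (hx.mono (Nat.le_succ n))
          rw [h l hl, map_zero] at hm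
          exact (zpow_ne_zero m (zero_lt_one.trans (v_gt v hX hx n (Nat.le_succ n))).ne') hm.symm
      · exact ⟨m, hm⟩

end Infinity

/-! ### Regular functions that vanish above `p = 0` have large poles -/

section Lower

open Polynomial
open scoped Classical

variable {K L : Type*} [Field K] [Field L] [Algebra K L] {q : ℕ} [hqp : Fact q.Prime]

/-- `f` is integral at all valuations that are finite at `X`, and vanishes at those above the
zeros of `p = T(X)`. -/
def InI (q : ℕ) (X : L) (n : ℕ) (f : (ℕ → L) → L) : Prop :=
  ∀ x, Gen q X n x → ∀ A : ValuationSubring L, A.valuation X ≤ 1 →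
    A.valuation (f x) ≤ 1 ∧ (A.valuation (T q X) < 1 → A.valuation (f x) < 1)

omit hqp in
lemma transcendental_sub {X : L} (hX : Transcendental K X) (θ : K) :
    Transcendental K (X - algebraMap K L θ) := by
  intro h
  apply hX
  have := h.add (isAlgebraic_algebraMap (A := L) θ)
  simpa using this

omit hqp in
lemma T_ne_zero_of_transcendental {X : L} (hX : Transcendental K X) (hq : 2 ≤ q) :
    T q X ≠ 0 := by
  intro h
  have h1 : aeval X (Polynomial.X ^ q + Polynomial.X : K[X]) = 0 := by simpa [T] using h
  have h2 := congrArg (fun p => coeff p 1) ((transcendental_iff.1 hX) _ h1)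
  simp [coeff_X_pow, show (1 : ℕ) ≠ q by omega] at h2

variable [Fintype K] [CharP K q] [CharP L q] (hK : Fintype.card K = q ^ 2)

omit [CharP K q] in
lemma pow_dvd_of_inI {X : L} (hX : Transcendental K X) {f : (ℕ → L) → L} (hI : InI q X 0 f)
    {a : K[X]} (ha : a ≠ 0) {s : ℕ}
    (hf : ∀ x, Pt q 0 x → f x = aeval (x 0) a / T q (x 0) ^ s) {θ : K} (hθ : T q θ = 0) :
    (Polynomial.X - C θ) ^ (s + 1) ∣ a := by
  obtain ⟨A, hA⟩ := exists_valuationSubring (transcendental_sub hX θ)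
  set v := A.valuation
  set t := X - algebraMap K L θ with ht
  have hXt : X = t + algebraMap K L θ := by rw [ht]; ring
  have hT0 := T_ne_zero_of_transcendental hX hqp.out.two_le
  have hT : T q X = T q t := by
    rw [ht, T_sub, T_algebraMap, hθ, map_zero, sub_zero]
  have hvT : v (T q X) = v t := by rw [hT, v_T_of_lt v hA]
  have ht0 : 0 < v t := by
    rw [← hvT, zero_lt_iff]
    exact (map_ne_zero v).2 hT0
  have hvX : v X ≤ 1 := by
    rw [hXt]
    exact (v.map_add _ _).trans (max_le hA.le (v_const_le v θ))
  have hgen : Gen q X 0 fun _ => X := ⟨⟨hT0, fun i hi => by omega⟩, rfl⟩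
  have h1 := (hI _ hgen A hvX).2 (by rw [hvT]; exact hA)
  rw [hf _ hgen.1, map_div₀, map_pow] at h1
  change v (aeval X a) / v (T q X) ^ s < 1 at h1
  rw [hvT, div_lt_one₀ (pow_pos ht0 s)] at h1
  obtain ⟨b, hab, hb⟩ := exists_eq_pow_rootMultiplicity_mul_and_not_dvd a ha θ
  set k := rootMultiplicity θ a
  have hb0 : b.eval θ ≠ 0 := by rwa [dvd_iff_isRoot] at hb
  obtain ⟨c, hc⟩ : Polynomial.X - C θ ∣ b - C (b.eval θ) := by
    rw [dvd_iff_isRoot]; simp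
  have hvb : v (aeval X b) = 1 := by
    have e : aeval X b = algebraMap K L (b.eval θ) + t * aeval X c := by
      have := congrArg (aeval X) hc
      simp only [map_sub, map_mul, aeval_X, aeval_C] at this
      rw [← ht] at this
      rw [← this]
      ring
    rw [e, Valuation.map_add_eq_of_lt_left, v_const v hb0]
    rw [v_const v hb0, map_mul]
    exact mul_lt_one_of_lt_of_le hA (v_aeval_le v hvX c)
  have hva : v (aeval X a) = v t ^ k := by
    rw [hab, map_mul, map_pow, map_mul, hvb, mul_one, map_pow, map_sub, aeval_X, aeval_C]
  rw [hva] at h1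
  have hks : s < k := by
    by_contra hc
    exact absurd h1 (not_lt.2 (pow_le_pow_of_le_one zero_le hA.le (not_lt.1 hc)))
  exact (pow_dvd_pow _ hks).trans ⟨b, hab⟩

include hK in
/-- The leading coefficient of a normal form is a combination of values of the function at
conjugate points, hence inherits `InI`. -/
lemma inI_leading [IsAlgClosed L] {X : L} {n : ℕ} {f : (ℕ → L) → L} (hI : InI q X (n + 1) f)
    {g : ℕ → (ℕ → L) → L} (hg : ∀ l, Rep K q n (g l)) {d : ℕ} (hd : d < q)
    (hfg : ∀ x, Pt q (n + 1) x → f x = ∑ l ∈ Finset.range (d + 1), g l x * x (n + 1) ^ l) :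
    InI q X n (g d) := by
  intro x hx A hA
  set v := A.valuation
  obtain ⟨y, hy⟩ := exists_T_eq (q := q) (x n ^ (q + 1) / T q (x n))
  obtain ⟨s, hs, hcard⟩ := Finset.exists_subset_card_eq
    (s := Finset.univ.filter fun z : K => T q z = 0) (n := d + 1)
    (by rw [card_ker (q := q) hK]; exact hd)
  have hpt : ∀ θ ∈ s, Gen q X (n + 1) (Function.update x (n + 1) (y + algebraMap K L θ)) := by
    intro θ hθ
    refine hx.extend ?_
    rw [T_add, T_algebraMap, (Finset.mem_filter.1 (hs hθ)).2, map_zero, add_zero, hy]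
  let P : L[X] := ∑ l ∈ Finset.range (d + 1), C (g l x) * Polynomial.X ^ l
  have hP : P.degree < s.card := by
    rw [hcard]
    refine (degree_sum_le _ _).trans_lt ?_
    rw [Finset.sup_lt_iff (WithBot.bot_lt_coe _)]
    intro k hk
    exact (degree_C_mul_X_pow_le _ _).trans_lt (by exact_mod_cast Finset.mem_range.1 hk)
  have hinj : Function.Injective fun θ : K => y + algebraMap K L θ := fun a b hab =>
    (algebraMap K L).injective (add_left_cancel hab)
  have hlead := Lagrange.coeff_eq_sum (v := fun θ : K => y + algebraMap K L θ) (s := s)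
    hinj.injOn hP
  have hco : P.coeff (s.card - 1) = g d x := by
    simp [P, hcard, finsetSum_coeff, coeff_C_mul, coeff_X_pow]
  have hev : ∀ θ ∈ s, P.eval (y + algebraMap K L θ)
      = f (Function.update x (n + 1) (y + algebraMap K L θ)) := by
    intro θ hθ
    rw [hfg _ (hpt θ hθ).1]
    simp only [P, eval_finsetSum, eval_mul, eval_C, eval_pow, eval_X]
    refine Finset.sum_congr rfl fun k _ => ?_
    have hk : g k (Function.update x (n + 1) (y + algebraMap K L θ)) = g k x :=
      (hg k).eq_of_eq hx.1 fun i hi => Function.update_of_ne (by omega) _ _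
    rw [Function.update_self, hk]
  have hval : ∀ θ ∈ s, v (P.eval (y + algebraMap K L θ) /
      ∏ j ∈ s.erase θ, ((y + algebraMap K L θ) - (y + algebraMap K L j)))
      = v (f (Function.update x (n + 1) (y + algebraMap K L θ))) := by
    intro θ hθ
    have h1 : v (∏ j ∈ s.erase θ, ((y + algebraMap K L θ) - (y + algebraMap K L j))) = 1 := by
      rw [map_prod]
      refine Finset.prod_eq_one fun j hj => ?_
      rw [add_sub_add_left_eq_sub, ← map_sub, v_const]
      exact sub_ne_zero.2 (Finset.ne_of_mem_erase hj).symm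
    rw [map_div₀, h1, div_one, hev θ hθ]
  rw [← hco, hlead]
  refine ⟨v.map_sum_le fun θ hθ => ?_, fun hT => v.map_sum_lt one_ne_zero fun θ hθ => ?_⟩
  · rw [hval θ hθ]
    exact (hI _ (hpt θ hθ) A hA).1
  · rw [hval θ hθ]
    exact (hI _ (hpt θ hθ) A hA).2 hT

include hK in
/-- A regular function satisfying `InI` and not identically zero has at infinity a pole at least
as large as that of `p`. -/
theorem Rep.ge_of_inI [IsAlgClosed L] {X : L} (hX : Transcendental K X) {Γ : Type*}
    [LinearOrderedCommGroupWithZero Γ] (v : Valuation L Γ) (hv : 1 < v X) {n : ℕ}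
    {f : (ℕ → L) → L} (hf : Rep K q n f) (hI : InI q X n f) :
    (∀ x, Pt q n x → f x = 0) ∨ ∀ x, Gen q X n x → v (T q X) ≤ v (f x) := by
  induction n generalizing f with
  | zero =>
    obtain ⟨a, s, ha⟩ := hf.normal_zero
    by_cases h0 : a = 0
    · left
      intro x hx
      rw [ha x hx, h0, map_zero, zero_div]
    · right
      intro x hx
      have hdvd : ∏ θ ∈ Finset.univ.filter (fun z : K => T q z = 0),
          (Polynomial.X - C θ) ^ (s + 1) ∣ a :=
        Finset.prod_dvd_of_coprime (fun α _ β _ hne => (isCoprime_X_sub_C_of_isUnit_sub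
          (sub_ne_zero.2 hne).isUnit).pow) fun θ hθ =>
          pow_dvd_of_inI hX hI h0 ha (Finset.mem_filter.1 hθ).2
      have hdeg := natDegree_le_of_dvd hdvd h0
      rw [natDegree_prod_of_monic _ _ fun θ _ => (monic_X_sub_C θ).pow _] at hdeg
      simp only [natDegree_pow, natDegree_X_sub_C, mul_one, Finset.sum_const, smul_eq_mul] at hdeg
      have hc := card_ker (q := q) hK
      have hdeg' : q + q * s ≤ a.natDegree := by
        refine le_trans (le_of_eq ?_) hdeg
        have hc' : (Finset.univ.filter fun z : K => T q z = 0).card = q := by convert hc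
        rw [hc']
        ring
      have hv0 : 0 < v X := zero_lt_one.trans hv
      rw [ha x hx.1, map_div₀, hx.2, v_aeval_of_gt v hv h0, map_pow, v_T_of_gt v hv, ← pow_mul,
        le_div_iff₀ (pow_pos hv0 _), ← pow_add]
      exact pow_le_pow_right₀ hv.le hdeg'
  | succ n ih =>
    obtain ⟨g, hg, hfg⟩ := hf.normal_succ
    by_cases h0 : ∀ l < q, ∀ x, Pt q n x → g l x = 0
    · left
      intro x hx
      rw [hfg x hx]
      refine Finset.sum_eq_zero fun l hl => ?_
      rw [h0 l (Finset.mem_range.1 hl) x (hx.mono (Nat.le_succ n)), zero_mul]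
    · right
      -- `d` is the degree of `f` in the last coordinate
      let S := (Finset.range q).filter fun l => ¬ ∀ x, Pt q n x → g l x = 0
      have hS : S.Nonempty := by
        push Not at h0
        obtain ⟨l, hl, x', hx', hne⟩ := h0
        exact ⟨l, Finset.mem_filter.2 ⟨Finset.mem_range.2 hl, fun h => hne (h x' hx')⟩⟩
      obtain ⟨d, hdS, hmax⟩ := S.exists_max_image id hS
      obtain ⟨hdq, hd⟩ := Finset.mem_filter.1 hdS
      have hdq' := Finset.mem_range.1 hdq
      have hfg' : ∀ x, Pt q (n + 1) x →
          f x = ∑ l ∈ Finset.range (d + 1), g l x * x (n + 1) ^ l := by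
        intro x hx
        rw [hfg x hx]
        symm
        refine Finset.sum_subset (fun l hl => ?_) fun l hl hl' => ?_
        · simp only [Finset.mem_range] at hl ⊢
          omega
        · have : l ∉ S := fun h => hl' (Finset.mem_range.2 (Nat.lt_succ_of_le (hmax l h)))
          rw [Finset.mem_filter, not_and, not_not] at this
          rw [this hl x (hx.mono (Nat.le_succ n)), zero_mul]
      have hd' := (ih (hg d) (inI_leading hK hI hg hdq' hfg')).resolve_left hd
      intro x hx
      have hx' := hx.mono (Nat.le_succ n)
      have hTX : 0 < v (T q X) := by
        rw [v_T_of_gt v hv]; exact pow_pos (zero_lt_one.trans hv) _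
      rcases v_terms v hv (fun l => (hg l).vprop v hv) hx with h | ⟨-, -, h⟩
      · have := hd' x hx'
        rw [h d hdq', map_zero] at this
        exact absurd hTX (not_lt.2 this)
      · rw [hfg x hx.1]
        refine le_trans ?_ (h d hdq')
        rw [map_mul, map_pow]
        exact (hd' x hx').trans (le_mul_of_one_le_right zero_le
          (one_le_pow₀ (v_gt v hv hx _ le_rfl).le))

end Lower

/-! ### A module of functions with small poles -/

section Module

open Polynomial

variable {K L : Type*} [Field K] [Field L] [Algebra K L] {q : ℕ}

/-- The principal part subtracted from `x_{n+1}`. The term with index `i` cancels the pole of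
`x_{n+1}` at the points where `x_0, …, x_{i-1}` vanish but `x_i` does not, and the power of
`∏ (x_l^(q-1) + 1)` makes it harmless elsewhere. -/
def bfun (q n : ℕ) (x : ℕ → L) : L :=
  -∑ i ∈ (Finset.range (n + 1)).filter (fun i => n + 1 ≤ 2 * i),
    x i ^ 2 * (∏ l ∈ Finset.range i, (x l ^ (q - 1) + 1)) ^ (q ^ (n + 1)) * (x (2 * i - (n + 1)))⁻¹

/-- The functions that are polynomial in `x_0` and of degree less than `q` in each of the
modified coordinates `x_{i+1} - b_i`. -/
def Mem (K : Type*) {L : Type*} [Field K] [Field L] [Algebra K L] (q : ℕ) :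
    ℕ → ((ℕ → L) → L) → Prop
  | 0, m => ∃ a : K[X], ∀ x, Pt q 0 x → m x = aeval (x 0) a
  | n + 1, m => ∃ g : ℕ → (ℕ → L) → L, (∀ l, Mem K q n (g l)) ∧
      ∀ x, Pt q (n + 1) x → m x = ∑ l ∈ Finset.range q, g l x * (x (n + 1) - bfun q n x) ^ l

lemma rep_bfun (n : ℕ) : Rep K q n (bfun q n : (ℕ → L) → L) := by
  refine Rep.neg (Rep.sum _ fun i hi => ?_)
  rw [Finset.mem_filter, Finset.mem_range] at hi
  refine (((Rep.coord i (by omega)).pow 2).mul (Rep.pow (Rep.prod _ fun l hl => ?_) _)).mul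
    (Rep.inv _ (by omega))
  rw [Finset.mem_range] at hl
  exact ((Rep.coord l (by omega)).pow _).add .one

lemma Mem.rep {n : ℕ} {m : (ℕ → L) → L} (hm : Mem K q n m) : Rep K q n m := by
  induction n generalizing m with
  | zero =>
    obtain ⟨a, ha⟩ := hm
    exact (Rep.aeval a).congr ha
  | succ n ih =>
    obtain ⟨g, hg, h⟩ := hm
    exact (Rep.sum _ fun l _ => ((ih (hg l)).mono (Nat.le_succ n)).mul
      (((Rep.coord (n + 1) le_rfl).sub ((rep_bfun n).mono (Nat.le_succ n))).pow l)).congr h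

lemma Mem.zero (n : ℕ) : Mem K q n fun _ : ℕ → L => (0 : L) := by
  induction n with
  | zero => exact ⟨0, fun x _ => by simp⟩
  | succ n ih => exact ⟨_, fun _ => ih, fun x _ => by simp⟩

variable [hqp : Fact q.Prime] [Fintype K] {Γ : Type*} [LinearOrderedCommGroupWithZero Γ]
  (v : Valuation L Γ) {X : L} (hX : 1 < v X)

include hX

/-- At infinity every regular function is approximated by an element of `Mem`. -/
theorem exists_mem_approx {n : ℕ} {g : (ℕ → L) → L} (hg : Rep K q n g) :
    ∃ m, Mem K q n m ∧ ∀ x, Gen q X n x → v (g x - m x) < 1 := by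
  induction n generalizing g with
  | zero =>
    obtain ⟨a, s, ha⟩ := hg.normal_zero
    have hmonic : ((Polynomial.X ^ q + Polynomial.X : K[X]) ^ s).Monic :=
      (monic_X_pow_add (by simpa using hqp.out.one_lt)).pow s
    set P : K[X] := (Polynomial.X ^ q + Polynomial.X) ^ s with hP
    refine ⟨fun x => aeval (x 0) (a /ₘ P), ⟨_, fun _ _ => rfl⟩, fun x hx => ?_⟩
    have hT0 : T q X ≠ 0 := by rw [← hx.2]; exact hx.1.1
    have hPX : aeval X P = T q X ^ s := by simp [hP, T]
    have hP0 : aeval X P ≠ 0 := by rw [hPX]; exact pow_ne_zero _ hT0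
    have e : g x - aeval (x 0) (a /ₘ P) = aeval X (a %ₘ P) / aeval X P := by
      rw [ha x hx.1, hx.2, ← hPX, eq_div_iff hP0, sub_mul, div_mul_cancel₀ _ hP0, sub_eq_iff_eq_add,
        mul_comm, ← map_mul, ← map_add, modByMonic_add_div]
    rw [e, map_div₀]
    by_cases h0 : a %ₘ P = 0
    · simp [h0]
    · rw [v_aeval_of_gt v hX h0, v_aeval_of_gt v hX hmonic.ne_zero,
        div_lt_one₀ (pow_pos (zero_lt_one.trans hX) _)]
      exact pow_lt_pow_right₀ hX (natDegree_lt_natDegree h0 (degree_modByMonic_lt a hmonic))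
  | succ n ih =>
    obtain ⟨g', hg', hgg⟩ := hg.normal_succ
    have main : ∀ d ≤ q, ∀ g : ℕ → (ℕ → L) → L, (∀ l, Rep K q n (g l)) →
        ∃ m : ℕ → (ℕ → L) → L, (∀ l, Mem K q n (m l)) ∧ ∀ x, Gen q X (n + 1) x →
          v (∑ l ∈ Finset.range d, g l x * x (n + 1) ^ l
            - ∑ l ∈ Finset.range d, m l x * (x (n + 1) - bfun q n x) ^ l) < 1 := by
      intro d
      induction d with
      | zero => exact fun _ g _ => ⟨_, fun _ => Mem.zero n, fun x _ => by simp⟩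
      | succ d ihd =>
        intro hd g hg
        obtain ⟨md, hmd, happ⟩ := ih (hg d)
        -- subtracting `md * (x_{n+1} - b)^d` changes the lower coefficients as follows
        obtain ⟨m, hm, hma⟩ := ihd (by omega)
          (fun l x => g l x - md x * ((-bfun q n x) ^ (d - l) * algebraMap K L (d.choose l : K)))
          fun l => (hg l).sub (hmd.rep.mul (((rep_bfun n).neg.pow _).mul (.const _)))
        refine ⟨fun l => if l < d then m l else md, fun l => ?_, fun x hx => ?_⟩
        · by_cases h : l < d <;> simp [h, hm, hmd]
        have hx' := hx.mono (Nat.le_succ n)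
        have e1 : ∑ l ∈ Finset.range (d + 1), (if l < d then m l else md) x
              * (x (n + 1) - bfun q n x) ^ l
            = ∑ l ∈ Finset.range d, m l x * (x (n + 1) - bfun q n x) ^ l
              + md x * (x (n + 1) - bfun q n x) ^ d := by
          rw [Finset.sum_range_succ]
          simp only [lt_irrefl, if_false]
          congr 1
          refine Finset.sum_congr rfl fun l hl => ?_
          rw [if_pos (Finset.mem_range.1 hl)]
        have e2 : (x (n + 1) - bfun q n x) ^ d
            = ∑ l ∈ Finset.range d, (-bfun q n x) ^ (d - l) * algebraMap K L (d.choose l : K)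
                * x (n + 1) ^ l + x (n + 1) ^ d := by
          rw [sub_eq_add_neg, add_pow, Finset.sum_range_succ]
          simp only [Nat.sub_self, pow_zero, Nat.choose_self, Nat.cast_one, mul_one, map_natCast]
          congr 1
          exact Finset.sum_congr rfl fun l _ => by ring
        have e3 : ∑ l ∈ Finset.range (d + 1), g l x * x (n + 1) ^ l
            - ∑ l ∈ Finset.range (d + 1), (if l < d then m l else md) x
              * (x (n + 1) - bfun q n x) ^ l
            = (∑ l ∈ Finset.range d, (g l x - md x * ((-bfun q n x) ^ (d - l)
                * algebraMap K L (d.choose l : K))) * x (n + 1) ^ l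
              - ∑ l ∈ Finset.range d, m l x * (x (n + 1) - bfun q n x) ^ l)
              + (g d x - md x) * x (n + 1) ^ d := by
          rw [e1, e2, Finset.sum_range_succ]
          simp only [sub_mul, Finset.sum_sub_distrib, mul_add, Finset.mul_sum, mul_assoc]
          ring
        rw [e3]
        refine (v.map_add _ _).trans_lt (max_lt (hma x hx) ?_)
        rw [map_mul, map_pow]
        obtain ⟨h1, h2⟩ :=
          v_succ_of_gt v hx.1 (Nat.lt_succ_self n) (v_gt v hX hx n (Nat.le_succ n))
        have h3 := v_gt v hX hx n (Nat.le_succ n)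
        have hlt := happ x hx'
        rcases ((hg d).sub hmd.rep).vprop v hX with h | h
        · have h4 : g d x - md x = 0 := h x hx'.1
          rw [h4, map_zero, zero_mul]
          exact zero_lt_one
        · obtain ⟨k, hk⟩ := h x hx'
          beta_reduce at hk
          rw [hk] at hlt ⊢
          have hk0 : k < 0 := by
            by_contra hc
            exact absurd hlt (not_lt.2 (one_le_zpow₀ h3.le (not_lt.1 hc)))
          have h5 : v (x n) ^ k ≤ (v (x n))⁻¹ := by
            rw [← zpow_neg_one]
            exact zpow_le_zpow_right₀ h3.le (by omega)
          refine (mul_le_mul_left h5 _).trans_lt ?_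
          rw [← h1, inv_mul_lt_iff₀ (pow_pos (zero_lt_one.trans h2) _), mul_one]
          exact pow_lt_pow_right₀ h2 hd
    obtain ⟨m, hm, h⟩ := main q le_rfl g' hg'
    refine ⟨_, ⟨m, hm, fun _ _ => rfl⟩, fun x hx => ?_⟩
    rw [hgg x hx.1]
    exact h x hx

/-- `Mem` contains functions with every prescribed pole order at infinity. -/
lemma exists_mem_pow (n d : ℕ) :
    ∃ m : (ℕ → L) → L, Mem K q n m ∧ ∀ x, Gen q X n x → v (m x) = v (x n) ^ d := by
  obtain ⟨m, hm, h⟩ := exists_mem_approx (K := K) (q := q) v hX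
    ((Rep.coord n le_rfl).pow d : Rep K q n fun x : ℕ → L => x n ^ d)
  refine ⟨m, hm, fun x hx => ?_⟩
  rw [← map_pow]
  refine v.map_eq_of_sub_lt ?_
  rw [v.map_sub_swap]
  refine (h x hx).trans_le ?_
  rw [map_pow]
  exact one_le_pow₀ (v_gt v hX hx n le_rfl).le

end Module

/-! ### Local analysis above the zeros of `p` -/

section Local

variable {L Γ : Type*} [Field L] {q : ℕ} [hqp : Fact q.Prime]
  [LinearOrderedCommGroupWithZero Γ] (v : Valuation L Γ)

/-- As long as the coordinates lie in the maximal ideal, their valuations are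
`μ, μ^q, μ^(q²), …` with `μ = v(p)`. -/
lemma v_before {N : ℕ} {x : ℕ → L} (hx : Pt q N x) (h0 : v (x 0) ≤ 1) :
    ∀ i ≤ N, (∀ j < i, v (x j) < 1) → v (x i) ≤ 1 ∧ v (T q (x i)) = v (T q (x 0)) ^ q ^ i
  | 0, _, _ => ⟨h0, by simp⟩
  | i + 1, hi, hj => by
    obtain ⟨-, h2⟩ := v_before hx h0 i (by omega) fun j hj' => hj j (by omega)
    have hlt := hj i (by omega)
    have hz : v (x i) ≠ 0 := (map_ne_zero v).2 (hx.ne i (by omega))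
    have h3 : v (T q (x (i + 1))) = v (x i) ^ q := by
      rw [v_T_succ v hx hi, v_T_of_lt v hlt, pow_succ, mul_div_assoc, div_self hz, mul_one]
    refine ⟨v_le_of_T (q := q) v ?_, ?_⟩
    · rw [h3]
      exact pow_le_one₀ zero_le hlt.le
    · rw [h3, ← v_T_of_lt (q := q) v hlt, h2, ← pow_mul, ← pow_succ]

lemma v_before_eq {N : ℕ} {x : ℕ → L} (hx : Pt q N x) (h0 : v (x 0) ≤ 1) {i : ℕ} (hi : i ≤ N)
    (hj : ∀ j ≤ i, v (x j) < 1) : v (x i) = v (T q (x 0)) ^ q ^ i := by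
  rw [← v_T_of_lt (q := q) v (hj i le_rfl)]
  exact (v_before v hx h0 i hi fun j h => hj j h.le).2

/-- Terms of `bfun` before the first unit coordinate are integral. -/
lemma v_term_before {N : ℕ} {x : ℕ → L} (hx : Pt q N x) (h0 : v (x 0) ≤ 1)
    (hT : v (T q (x 0)) < 1) {i j : ℕ} (E : ℕ) (hi : i ≤ N) (hji : j ≤ i)
    (hlt : ∀ j ≤ i, v (x j) < 1) :
    v (x i ^ 2 * (∏ l ∈ Finset.range i, (x l ^ (q - 1) + 1)) ^ E * (x j)⁻¹) ≤ 1 := by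
  have h1 : v (∏ l ∈ Finset.range i, (x l ^ (q - 1) + 1)) = 1 := by
    rw [map_prod]
    exact Finset.prod_eq_one fun l hl => v_y_of_lt v (hlt l (Finset.mem_range.1 hl).le)
  have hj0 : 0 < v (x j) := zero_lt_iff.2 ((map_ne_zero v).2 (hx.ne j (hji.trans hi)))
  have h2 : v (x i) ≤ v (x j) := by
    rw [v_before_eq v hx h0 hi hlt, v_before_eq v hx h0 (hji.trans hi) fun k hk =>
      hlt k (hk.trans hji)]
    exact pow_le_pow_of_le_one zero_le hT.le (Nat.pow_le_pow_right hqp.out.pos hji)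
  rw [map_mul, map_mul, map_pow, map_pow, h1, one_pow, mul_one, map_inv₀, ← div_eq_mul_inv,
    div_le_one₀ hj0, sq]
  exact (mul_le_of_le_one_right zero_le (hlt i le_rfl).le).trans h2

/-- While all coordinates are in the maximal ideal, the modified coordinates are integral. -/
lemma v_modified_before {N : ℕ} {x : ℕ → L} (hx : Pt q N x) (h0 : v (x 0) ≤ 1)
    (hT : v (T q (x 0)) < 1) {n : ℕ} (hn : n + 1 ≤ N) (hlt : ∀ j ≤ n, v (x j) < 1) :
    v (x (n + 1) - bfun q n x) ≤ 1 := by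
  rw [bfun, sub_neg_eq_add]
  refine (v.map_add _ _).trans (max_le ?_ (v.map_sum_le fun i hi => ?_))
  · exact (v_before v hx h0 (n + 1) hn fun j hj => hlt j (by omega)).1
  · rw [Finset.mem_filter, Finset.mem_range] at hi
    exact v_term_before v hx h0 hT _ (by omega) (by omega) fun j hj => hlt j (by omega)

/-- The valuation of `x_i^(q+1) / T(x_i)`, the right-hand side of the equation for
`T(x_{i+1})`. -/
def om (q : ℕ) (x : ℕ → L) (i : ℕ) : Γ := v (x i) ^ (q + 1) / v (T q (x i))

/-- The situation above a zero of `p` where `x_l` is the first coordinate that is a unit. -/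
structure Loc (q N : ℕ) (x : ℕ → L) (l : ℕ) : Prop where
  pt : Pt q N x
  le : v (x 0) ≤ 1
  T_lt : v (T q (x 0)) < 1
  l_le : l ≤ N
  before : ∀ j < l, v (x j) < 1
  unit : v (x l) = 1

variable {v} {N l : ℕ} {x : ℕ → L} (h : Loc v q N x l)

include h

omit hqp in
lemma Loc.om_l : om v q x l = (v (T q (x l)))⁻¹ := by
  rw [om, h.unit, one_pow, one_div]

lemma Loc.v_T_l : v (T q (x l)) = v (T q (x 0)) ^ q ^ l :=
  (v_before v h.pt h.le l h.l_le h.before).2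

omit hqp in
lemma Loc.T_pos : 0 < v (T q (x 0)) := zero_lt_iff.2 ((map_ne_zero v).2 h.pt.1)

lemma Loc.v_T_l_lt : v (T q (x l)) < 1 := by
  rw [h.v_T_l]
  exact pow_lt_one₀ zero_le h.T_lt (pow_ne_zero _ hqp.out.ne_zero)

lemma Loc.one_lt_om_l : 1 < om v q x l := by
  rw [h.om_l, one_lt_inv₀ (by rw [h.v_T_l]; exact pow_pos h.T_pos _)]
  exact h.v_T_l_lt

omit h in
lemma om_of_gt {i : ℕ} (hi : 1 < v (x i)) : om v q x i = v (x i) := by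
  have h0 : v (x i) ≠ 0 := (zero_lt_one.trans hi).ne'
  rw [om, v_T_of_gt v hi, pow_succ, mul_div_assoc, mul_div_cancel₀ _ (pow_ne_zero q h0)]

/-- After the unit coordinate `x_l` the coordinates have poles, totally ramified at each step. -/
lemma Loc.after : ∀ k, l + k + 1 ≤ N →
    1 < v (x (l + k + 1)) ∧ v (x (l + k + 1)) ^ q = om v q x (l + k)
  | 0, hk => by
    have h1 : v (T q (x (l + 1))) = om v q x l := v_T_succ v h.pt hk
    have h2 : 1 < v (x (l + 1)) := by
      by_contra hc
      have := v_T_le (q := q) v (not_lt.1 hc)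
      rw [h1] at this
      exact absurd h.one_lt_om_l (not_lt.2 this)
    rw [v_T_of_gt v h2] at h1
    exact ⟨h2, h1⟩
  | k + 1, hk => by
    have ih := Loc.after k (by omega)
    have := v_succ_of_gt v h.pt (i := l + k + 1) hk ih.1
    exact ⟨this.2, this.1.trans (om_of_gt ih.1).symm⟩

lemma Loc.om_after {k : ℕ} (hk : l + k + 1 ≤ N) : om v q x (l + k + 1) = v (x (l + k + 1)) :=
  om_of_gt (h.after k hk).1

lemma Loc.om_pow : ∀ k, l + k ≤ N → om v q x (l + k) ^ q ^ k = om v q x l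
  | 0, _ => by simp
  | k + 1, hk => by
    rw [pow_succ', pow_mul, ← add_assoc, h.om_after hk, (h.after k hk).2,
      Loc.om_pow k (by omega)]

lemma Loc.one_lt_om : ∀ k, l + k ≤ N → 1 < om v q x (l + k)
  | 0, _ => h.one_lt_om_l
  | k + 1, hk => by
    rw [← add_assoc, h.om_after hk]
    exact (h.after k hk).1

lemma Loc.om_two_mul (hl : l + l ≤ N) : om v q x (l + l) = (v (T q (x 0)))⁻¹ := by
  have h1 := h.om_pow l hl
  rw [h.om_l, h.v_T_l, ← inv_pow] at h1
  exact (pow_left_inj₀ zero_le zero_le (pow_ne_zero l hqp.out.ne_zero)).1 h1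

lemma Loc.v_prod : ∀ k, l + k ≤ N →
    v (∏ i ∈ Finset.range (l + k + 1), (x i ^ (q - 1) + 1)) = (om v q x (l + k))⁻¹
  | 0, _ => by
    rw [add_zero, Finset.prod_range_succ, map_mul, map_prod,
      Finset.prod_eq_one fun i hi => v_y_of_lt v (h.before i (Finset.mem_range.1 hi)), one_mul,
      h.om_l, inv_inv, T_eq_mul, map_mul, h.unit, one_mul]
  | k + 1, hk => by
    have ih := Loc.v_prod k (by omega)
    have ha := h.after k hk
    have h0 : v (x (l + k + 1)) ≠ 0 := (zero_lt_one.trans ha.1).ne'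
    rw [← add_assoc, Finset.prod_range_succ, map_mul, ih, v_y_of_gt v ha.1, h.om_after hk, ← ha.2,
      ← pow_pred_mul (q := q) (v (x (l + k + 1))), mul_inv_rev, mul_assoc,
      inv_mul_cancel₀ (pow_ne_zero _ h0), mul_one]

lemma Loc.v_inv_le {j : ℕ} (hj : j ≤ N) : (v (x j))⁻¹ ≤ om v q x l := by
  have hj0 : 0 < v (x j) := zero_lt_iff.2 ((map_ne_zero v).2 (h.pt.ne j hj))
  rcases lt_trichotomy j l with hjl | rfl | hjl
  · rw [h.om_l, inv_le_inv₀ hj0 (by rw [h.v_T_l]; exact pow_pos h.T_pos _), h.v_T_l,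
      v_before_eq v h.pt h.le hj fun i hi => h.before i (by omega)]
    exact pow_le_pow_of_le_one zero_le h.T_lt.le (Nat.pow_le_pow_right hqp.out.pos hjl.le)
  · rw [h.unit, inv_one]
    exact h.one_lt_om_l.le
  · obtain ⟨k, rfl⟩ : ∃ k, j = l + k + 1 := ⟨j - l - 1, by omega⟩
    exact (inv_le_one_of_one_le₀ (h.after k hj).1.le).trans h.one_lt_om_l.le

/-- Terms of `bfun` after the unit coordinate are integral. -/
lemma Loc.v_term_after {n k j : ℕ} (hk : l + k + 1 ≤ n) (hn : n ≤ N) (hj : j ≤ N) :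
    v (x (l + k + 1) ^ 2 * (∏ i ∈ Finset.range (l + k + 1), (x i ^ (q - 1) + 1)) ^ (q ^ (n + 1))
      * (x j)⁻¹) ≤ 1 := by
  have ha := h.after k (by omega)
  have ho := h.one_lt_om k (by omega)
  have ho0 := zero_lt_one.trans ho
  have h1 : v (x (l + k + 1)) ^ 2 ≤ om v q x (l + k) := by
    rw [← ha.2]
    exact pow_le_pow_right₀ ha.1.le hqp.out.two_le
  have h2 : (v (x j))⁻¹ ≤ om v q x (l + k) ^ q ^ k := by
    rw [h.om_pow k (by omega)]
    exact h.v_inv_le hj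
  have h3 : 1 + q ^ k ≤ q ^ (n + 1) := by
    have a1 : q ^ (k + 1) ≤ q ^ (n + 1) := Nat.pow_le_pow_right hqp.out.pos (by omega)
    have a2 : 1 ≤ q ^ k := Nat.one_le_pow _ _ hqp.out.pos
    have a3 : q ^ k * 2 ≤ q ^ k * q := Nat.mul_le_mul_left _ hqp.out.two_le
    rw [← pow_succ] at a3
    omega
  rw [map_mul, map_mul, map_pow, map_pow, map_inv₀, h.v_prod k (by omega)]
  calc v (x (l + k + 1)) ^ 2 * (om v q x (l + k))⁻¹ ^ q ^ (n + 1) * (v (x j))⁻¹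
      ≤ om v q x (l + k) * (om v q x (l + k))⁻¹ ^ q ^ (n + 1) * om v q x (l + k) ^ q ^ k := by
        gcongr
    _ = om v q x (l + k) ^ (1 + q ^ k) / om v q x (l + k) ^ q ^ (n + 1) := by
        rw [inv_pow, pow_add _ 1 (q ^ k), pow_one, div_eq_mul_inv]
        exact mul_right_comm _ _ _
    _ ≤ 1 := by
        rw [div_le_one₀ (pow_pos ho0 _)]
        exact pow_le_pow_right₀ ho.le h3

/-- Above the unit coordinate, the power of the product in `bfun` is close to `1`. -/
lemma Loc.v_prod_sub_one [CharP L q] (e : ℕ) : ∀ i ≤ l,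
    v ((∏ j ∈ Finset.range i, (x j ^ (q - 1) + 1)) ^ (q ^ e) - 1) ≤ v (T q (x 0)) ^ (q ^ e)
  | 0, _ => by simp
  | i + 1, hi => by
    have ih := Loc.v_prod_sub_one e i (by omega)
    have hNi : i ≤ N := by have := h.l_le; omega
    have e1 : (∏ j ∈ Finset.range (i + 1), (x j ^ (q - 1) + 1)) ^ (q ^ e) - 1
        = (∏ j ∈ Finset.range i, (x j ^ (q - 1) + 1)) ^ (q ^ e) * x i ^ ((q - 1) * q ^ e)
          + ((∏ j ∈ Finset.range i, (x j ^ (q - 1) + 1)) ^ (q ^ e) - 1) := by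
      rw [Finset.prod_range_succ, mul_pow, add_pow_char_pow, one_pow, ← pow_mul]
      ring
    rw [e1]
    refine (v.map_add _ _).trans (max_le ?_ ih)
    rw [map_mul, map_pow, map_prod, Finset.prod_eq_one fun j hj => v_y_of_lt v
      (h.before j (by have := Finset.mem_range.1 hj; omega)), one_pow, one_mul, map_pow,
      v_before_eq v h.pt h.le hNi fun j hj => h.before j (by omega), ← pow_mul]
    refine pow_le_pow_of_le_one zero_le h.T_lt.le ?_
    have a1 : 1 ≤ q ^ i := Nat.one_le_pow _ _ hqp.out.pos
    have a2 : 1 ≤ q - 1 := by have := hqp.out.two_le; omega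
    calc q ^ e = 1 * (1 * q ^ e) := by ring
      _ ≤ q ^ i * ((q - 1) * q ^ e) := Nat.mul_le_mul a1 (Nat.mul_le_mul_right _ a2)

/-- The term of `bfun` at the unit coordinate is `x_l² / x_j` up to integral elements. -/
lemma Loc.v_term_unit [CharP L q] {e j : ℕ} (hj : j < l) (he : j ≤ e) :
    v (x l ^ 2 * (∏ i ∈ Finset.range l, (x i ^ (q - 1) + 1)) ^ (q ^ e) * (x j)⁻¹
      - x l ^ 2 * (x j)⁻¹) ≤ 1 := by
  have hNj : j ≤ N := by have := h.l_le; omega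
  have e1 : x l ^ 2 * (∏ i ∈ Finset.range l, (x i ^ (q - 1) + 1)) ^ (q ^ e) * (x j)⁻¹
      - x l ^ 2 * (x j)⁻¹
      = x l ^ 2 * ((∏ i ∈ Finset.range l, (x i ^ (q - 1) + 1)) ^ (q ^ e) - 1) * (x j)⁻¹ := by ring
  have hj0 : 0 < v (x j) := zero_lt_iff.2 ((map_ne_zero v).2 (h.pt.ne j hNj))
  rw [e1, map_mul, map_mul, map_pow, h.unit, one_pow, one_mul, map_inv₀, ← div_eq_mul_inv,
    div_le_one₀ hj0]
  refine (h.v_prod_sub_one e l le_rfl).trans ?_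
  rw [v_before_eq v h.pt h.le hNj fun i hi => h.before i (by omega)]
  exact pow_le_pow_of_le_one zero_le h.T_lt.le (Nat.pow_le_pow_right hqp.out.pos he)

omit h hqp in
lemma w_eq (a : L) (ha : T q a ≠ 0) : a ^ (q + 1) / T q a = a - a ^ 2 / T q a := by
  rw [div_eq_iff ha, sub_mul, div_mul_cancel₀ _ ha, T]
  ring

omit h hqp in
lemma v_T_sq_mul [CharP L q] {a u : L} (ha : v a ≤ 1) (hu : v (T q a) * v u ^ q ≤ 1) :
    v (T q (a ^ 2 * u) - a ^ 2 * T q u) ≤ 1 := by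
  have hTa := v_T_le (q := q) v ha
  have e1 : T q (a ^ 2 * u) - a ^ 2 * T q u = (T q a * u ^ q) * (T q a - (a + a)) := by
    have : a ^ q = T q a - a := by rw [T]; ring
    rw [T, T, mul_pow, ← pow_mul, mul_comm 2 q, pow_mul, this]
    ring
  rw [e1, map_mul, map_mul, map_pow]
  refine mul_le_one' hu ((v.map_sub _ _).trans (max_le hTa ?_))
  exact (v.map_add _ _).trans (max_le ha ha)

/-- The main approximation: the pole of `x_{l+k+1}` is that of `-x_l² / x_{l-k-1}`. -/
lemma Loc.approx [CharP L q] : ∀ k, k + 1 ≤ l → l + k + 1 ≤ N →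
    v (x (l + k + 1) + x l ^ 2 * (x (l - (k + 1)))⁻¹) ≤ 1
  | 0, hk, hN => by
    obtain ⟨z, hz⟩ : ∃ z, l = z + 1 := ⟨l - 1, by omega⟩
    have hzl : l - (0 + 1) = z := by omega
    have hlN := h.l_le
    rw [hzl, add_zero]
    have hzN : z ≤ N := by omega
    have hT := h.pt.T_ne l h.l_le
    have hTu : T q (x z)⁻¹ = (T q (x l))⁻¹ := by
      have := h.pt.T_inv z (by omega)
      rw [← hz] at this
      exact this.symm
    have hu : 1 < v (x z)⁻¹ := by
      rw [map_inv₀, one_lt_inv₀ (zero_lt_iff.2 ((map_ne_zero v).2 (h.pt.ne z hzN)))]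
      exact h.before z (by omega)
    have hvu : v (T q (x l)) * v (x z)⁻¹ ^ q ≤ 1 := by
      rw [← v_T_of_gt v hu, hTu, ← map_mul, mul_inv_cancel₀ hT, map_one]
    apply v_le_of_T (q := q) v
    have e1 : T q (x (l + 1) + x l ^ 2 * (x z)⁻¹)
        = x l + (T q (x l ^ 2 * (x z)⁻¹) - x l ^ 2 * T q (x z)⁻¹) := by
      rw [T_add, h.pt.T_succ l (by omega), w_eq _ hT, hTu]
      ring
    rw [e1]
    exact (v.map_add _ _).trans (max_le h.unit.le (v_T_sq_mul h.unit.le hvu))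
  | k + 1, hk, hN => by
    obtain ⟨z, hz⟩ : ∃ z, l - (k + 1) = z + 1 := ⟨l - (k + 1) - 1, by omega⟩
    have hlN := h.l_le
    have ih := Loc.approx k (by omega) (by omega)
    rw [hz] at ih
    have hzl : l - (k + 1 + 1) = z := by omega
    have hzN : z + 1 ≤ N := by omega
    rw [hzl]
    have hTz := h.pt.T_ne (z + 1) hzN
    have hz0 := h.pt.ne (z + 1) hzN
    have hvz := h.before (z + 1) (by omega)
    have hTu : T q (x z)⁻¹ = (T q (x (z + 1)))⁻¹ := (h.pt.T_inv z (by omega)).symm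
    have hu : 1 < v (x z)⁻¹ := by
      rw [map_inv₀, one_lt_inv₀ (zero_lt_iff.2 ((map_ne_zero v).2 (h.pt.ne z (by omega))))]
      exact h.before z (by omega)
    have hvu : v (T q (x l)) * v (x z)⁻¹ ^ q ≤ 1 := by
      rw [← v_T_of_gt v hu, hTu, map_inv₀, v_T_of_lt v hvz]
      refine (mul_le_mul_right (h.v_inv_le hzN) _).trans ?_
      rw [h.om_l, mul_inv_cancel₀ ((map_ne_zero v).2 (h.pt.T_ne l h.l_le))]
    have ha := (h.after k (by omega)).1
    set a := x (l + k + 1) with ha_def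
    have hTa := h.pt.T_ne (l + k + 1) (by omega)
    rw [← ha_def] at hTa
    have c1 : v (a ^ 2 / T q a) ≤ 1 := by
      rw [map_div₀, v_T_of_gt v ha, map_pow, div_le_one₀ (pow_pos (zero_lt_one.trans ha) _)]
      exact pow_le_pow_right₀ ha.le hqp.out.two_le
    have c2 : v (x l ^ 2 * ((x (z + 1))⁻¹ - (T q (x (z + 1)))⁻¹)) ≤ 1 := by
      have e : (x (z + 1))⁻¹ - (T q (x (z + 1)))⁻¹ = x (z + 1) ^ (q - 1) / T q (x (z + 1)) := by
        rw [inv_sub_inv hz0 hTz, div_eq_div_iff (mul_ne_zero hz0 hTz) hTz]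
        have : T q (x (z + 1)) = x (z + 1) * x (z + 1) ^ (q - 1) + x (z + 1) := by
          rw [T_eq_mul]; ring
        rw [this]
        ring
      have hvz0 : 0 < v (x (z + 1)) := zero_lt_iff.2 ((map_ne_zero v).2 hz0)
      rw [e, map_mul, map_pow, h.unit, one_pow, one_mul, map_div₀, v_T_of_lt v hvz, map_pow,
        div_le_one₀ hvz0]
      exact pow_le_of_le_one zero_le hvz.le q_sub_one_ne
    apply v_le_of_T (q := q) v
    have e1 : T q (x (l + (k + 1) + 1) + x l ^ 2 * (x z)⁻¹)
        = (a + x l ^ 2 * (x (z + 1))⁻¹) - a ^ 2 / T q a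
          + (T q (x l ^ 2 * (x z)⁻¹) - x l ^ 2 * T q (x z)⁻¹)
          - x l ^ 2 * ((x (z + 1))⁻¹ - (T q (x (z + 1)))⁻¹) := by
      rw [T_add, ← add_assoc, h.pt.T_succ (l + k + 1) (by omega), ← ha_def, w_eq _ hTa, hTu]
      ring
    rw [e1]
    refine (v.map_sub _ _).trans (max_le ((v.map_add _ _).trans (max_le ?_ ?_)) c2)
    · exact (v.map_sub _ _).trans (max_le ih c1)
    · exact v_T_sq_mul h.unit.le hvu

end Local

/-! ### Integrality of `p` times the functions in `Mem` -/

section Integral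

open Polynomial

variable {K L Γ : Type*} [Field K] [Field L] [Algebra K L] {q : ℕ} [hqp : Fact q.Prime]
  [LinearOrderedCommGroupWithZero Γ] {v : Valuation L Γ} {N l : ℕ} {x : ℕ → L}

/-- Up to level `2 l` the principal parts in `bfun` cancel the poles of the coordinates. -/
lemma Loc.v_modified_le_one [CharP L q] (h : Loc v q N x l) {n : ℕ} (hn : n + 1 ≤ N)
    (hnl : n < l + l) : v (x (n + 1) - bfun q n x) ≤ 1 := by
  have hlN := h.l_le
  rcases lt_or_ge n l with hl | hl
  · exact v_modified_before v h.pt h.le h.T_lt hn fun j hj => h.before j (by omega)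
  obtain ⟨k, rfl⟩ : ∃ k, n = l + k := ⟨n - l, by omega⟩
  have hmem : l ∈ (Finset.range (l + k + 1)).filter (fun i => l + k + 1 ≤ 2 * i) := by
    rw [Finset.mem_filter, Finset.mem_range]
    omega
  have hj : 2 * l - (l + k + 1) = l - (k + 1) := by omega
  rw [bfun, sub_neg_eq_add, ← Finset.add_sum_erase _ _ hmem, hj, ← add_assoc]
  refine (v.map_add _ _).trans (max_le ?_ (v.map_sum_le fun i hi => ?_))
  · have h1 := h.approx k (by omega) hn
    have h2 := h.v_term_unit (e := l + k + 1) (j := l - (k + 1)) (by omega) (by omega)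
    have := (v.map_add _ _).trans (max_le h1 h2)
    convert this using 2
    ring
  · rw [Finset.mem_erase, Finset.mem_filter, Finset.mem_range] at hi
    obtain ⟨hne, hi1, hi2⟩ := hi
    rcases lt_or_gt_of_ne hne with hil | hil
    · exact v_term_before v h.pt h.le h.T_lt _ (by omega) (by omega) fun j hj =>
        h.before j (by omega)
    · obtain ⟨k', rfl⟩ : ∃ k', i = l + k' + 1 := ⟨i - l - 1, by omega⟩
      exact h.v_term_after (by omega) (by omega) (by omega)

/-- From level `2 l` on the principal parts in `bfun` do no harm. -/
lemma Loc.v_modified_le (h : Loc v q N x l) {n : ℕ} (hn : n + 1 ≤ N) (hnl : l + l ≤ n) :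
    v (x (n + 1) - bfun q n x) ≤ v (x (n + 1)) := by
  obtain ⟨k, rfl⟩ : ∃ k, n = l + k := ⟨n - l, by omega⟩
  rw [bfun, sub_neg_eq_add]
  refine (v.map_add _ _).trans (max_le le_rfl ((v.map_sum_le fun i hi => ?_).trans
    (h.after k hn).1.le))
  rw [Finset.mem_filter, Finset.mem_range] at hi
  obtain ⟨k', rfl⟩ : ∃ k', i = l + k' + 1 := ⟨i - l - 1, by omega⟩
  exact h.v_term_after (by omega) (by omega) (by omega)

variable [Fintype K]

omit hqp in
/-- If all modified coordinates are integral, so are the functions in `Mem`. -/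
lemma Mem.v_le_one (h0 : v (x 0) ≤ 1) (hx : Pt q N x) {n : ℕ} (hn : n ≤ N)
    (hmod : ∀ i < n, v (x (i + 1) - bfun q i x) ≤ 1) {m : (ℕ → L) → L} (hm : Mem K q n m) :
    v (m x) ≤ 1 := by
  induction n generalizing m with
  | zero =>
    obtain ⟨a, ha⟩ := hm
    rw [ha x (hx.mono hn)]
    exact v_aeval_le v h0 a
  | succ n ih =>
    obtain ⟨g, hg, h⟩ := hm
    rw [h x (hx.mono hn)]
    refine v.map_sum_le fun l _ => ?_
    rw [map_mul, map_pow]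
    exact mul_le_one' (ih (by omega) (fun i hi => hmod i (by omega)) (hg l))
      (pow_le_one₀ zero_le (hmod n (by omega)))

/-- Beyond level `2 l` the poles of functions in `Mem` grow, but never reach the zero of `p`. -/
lemma Mem.v_mul_om [CharP L q] (h : Loc v q N x l) {n : ℕ} (hn : n ≤ N) (hl : l + l ≤ n)
    {m : (ℕ → L) → L} (hm : Mem K q n m) : v (m x) * om v q x n ≤ (v (T q (x 0)))⁻¹ := by
  induction n, hl using Nat.le_induction generalizing m with
  | base =>
    rw [h.om_two_mul hn]
    exact mul_le_of_le_one_left zero_le (hm.v_le_one h.le h.pt hn fun i hi =>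
      h.v_modified_le_one (by omega) hi)
  | succ n hl ih =>
    obtain ⟨g, hg, hmg⟩ := hm
    obtain ⟨k, rfl⟩ : ∃ k, n = l + k := ⟨n - l, by omega⟩
    obtain ⟨h1, h2⟩ := h.after k hn
    have hpos := zero_lt_one.trans h1
    rw [hmg x (h.pt.mono hn), h.om_after hn, ← map_mul, Finset.sum_mul]
    refine v.map_sum_le fun j hj => ?_
    rw [map_mul, map_mul, map_pow]
    calc v (g j x) * v (x (l + k + 1) - bfun q (l + k) x) ^ j * v (x (l + k + 1))
        ≤ v (g j x) * (v (x (l + k + 1)) ^ (q - 1) * v (x (l + k + 1))) := by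
          rw [mul_assoc]
          refine mul_le_mul_right (mul_le_mul_left ?_ _) _
          exact (pow_le_pow_left₀ zero_le (h.v_modified_le hn hl) j).trans
            (pow_le_pow_right₀ h1.le (Nat.le_pred_of_lt (Finset.mem_range.1 hj)))
      _ = v (g j x) * om v q x (l + k) := by rw [pow_pred_mul, h2]
      _ ≤ _ := ih (by omega) (hg j)

/-- At a zero of `p` the functions in `Mem` have poles smaller than the zero of `p`. -/
lemma Mem.v_mul_lt [CharP L q] {n : ℕ} (hx : Pt q n x) (h0 : v (x 0) ≤ 1)
    (hT : v (T q (x 0)) < 1) {m : (ℕ → L) → L} (hm : Mem K q n m) :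
    v (T q (x 0)) * v (m x) < 1 := by
  classical
  have hT0 : 0 < v (T q (x 0)) := zero_lt_iff.2 ((map_ne_zero v).2 hx.1)
  have small : v (m x) ≤ 1 → v (T q (x 0)) * v (m x) < 1 := fun h =>
    (mul_le_of_le_one_right zero_le h).trans_lt hT
  by_cases hex : ∃ j, j ≤ n ∧ ¬ v (x j) < 1
  · obtain ⟨hl, hnl⟩ := Nat.find_spec hex
    have hbefore : ∀ j < Nat.find hex, v (x j) < 1 := fun j hj => by
      by_contra hc
      exact Nat.find_min hex hj ⟨by omega, hc⟩
    have h : Loc v q n x (Nat.find hex) := ⟨hx, h0, hT, hl, hbefore,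
      le_antisymm (v_before v hx h0 _ hl hbefore).1 (not_lt.1 hnl)⟩
    set l := Nat.find hex
    rcases lt_or_ge n (l + l) with hnl | hnl
    · exact small (hm.v_le_one h0 hx le_rfl fun i hi => h.v_modified_le_one (by omega) (by omega))
    · have h1 := hm.v_mul_om h le_rfl hnl
      obtain ⟨k, hk⟩ : ∃ k, n = l + k := ⟨n - l, by omega⟩
      have h2 : 1 < om v q x n := by
        rw [hk]
        exact h.one_lt_om k (by omega)
      rcases eq_or_ne (v (m x)) 0 with hz | hz
      · rw [hz, mul_zero]
        exact zero_lt_one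
      · have h3 : v (m x) < (v (T q (x 0)))⁻¹ :=
          (lt_mul_of_one_lt_right (zero_lt_iff.2 hz) h2).trans_le h1
        rwa [mul_comm, ← lt_div_iff₀ hT0, one_div]
  · push Not at hex
    exact small (hm.v_le_one h0 hx le_rfl fun i hi =>
      v_modified_before v hx h0 hT hi fun j hj => hex j (by omega))

omit [Fintype K] in
/-- Where `p` is a unit all coordinates are units. -/
lemma v_coord_of_unit {n : ℕ} (hx : Pt q n x) (h0 : v (x 0) ≤ 1) (hT : v (T q (x 0)) = 1) :
    ∀ i ≤ n, v (x i) = 1 ∧ v (T q (x i)) = 1 := by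
  have key : ∀ z : L, v z ≤ 1 → v (T q z) = 1 → v z = 1 := fun z h1 h2 => by
    refine le_antisymm h1 (not_lt.1 fun hlt => ?_)
    rw [v_T_of_lt v hlt] at h2
    exact hlt.ne h2
  intro i
  induction i with
  | zero => exact fun _ => ⟨key _ h0 hT, hT⟩
  | succ i ih =>
    intro hi
    obtain ⟨h1, h2⟩ := ih (by omega)
    have h3 : v (T q (x (i + 1))) = 1 := by
      rw [v_T_succ v hx hi, h1, h2, one_pow, div_one]
    exact ⟨key _ (v_le_of_T v h3.le) h3, h3⟩

/-- Where `p` is a unit all regular functions are integral. -/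
lemma Rep.v_le_one {n : ℕ} {f : (ℕ → L) → L} (hf : Rep K q n f) (hx : Pt q n x)
    (h0 : v (x 0) ≤ 1) (hT : v (T q (x 0)) = 1) : v (f x) ≤ 1 := by
  have hc := v_coord_of_unit hx h0 hT
  induction hf with
  | const c => exact v_const_le v c
  | coord i hi => exact (hc i hi).1.le
  | inv i hi => rw [map_inv₀, (hc i hi).1, inv_one]
  | invT => rw [map_inv₀, hT, inv_one]
  | add _ _ ih1 ih2 => exact (v.map_add _ _).trans (max_le ih1 ih2)
  | mul _ _ ih1 ih2 => rw [map_mul]; exact mul_le_one' ih1 ih2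
  | congr _ hc ih => rw [hc x hx]; exact ih

/-- The product of `p` with a function in `Mem` satisfies `InI`. -/
lemma Mem.inI [CharP L q] {X : L} {n : ℕ} {m : (ℕ → L) → L} (hm : Mem K q n m) :
    InI q X n fun x => T q (x 0) * m x := by
  rintro x ⟨hx, rfl⟩ A hA
  rcases (v_T_le (q := q) A.valuation hA).lt_or_eq with h | h
  · have := hm.v_mul_lt hx hA h
    rw [← map_mul] at this
    exact ⟨this.le, fun _ => this⟩
  · refine ⟨?_, fun h' => absurd h h'.ne⟩
    rw [map_mul, h, one_mul]
    exact hm.rep.v_le_one hx hA h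

end Integral

/-! ### The code -/

section Code

open Polynomial
open scoped Classical

variable {K L : Type*} [Field K] [Field L] [Algebra K L] {q : ℕ} [hqp : Fact q.Prime]
  [Fintype K]

omit hqp in
lemma aeval_hpoly (X : L) : aeval X (hpoly K q) =
    ∏ α ∈ Finset.univ.filter (fun z : K => T q z ≠ 0), (X - algebraMap K L α) := by
  rw [hpoly, map_prod]
  exact Finset.prod_congr rfl fun α _ => by simp

/-- The roots of `hpoly` are not zeros of `p`. -/
lemma v_hpoly [CharP L q] {Γ : Type*} [LinearOrderedCommGroupWithZero Γ] (v : Valuation L Γ)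
    {X : L} (h : v X ≤ 1) (hT : v (T q X) < 1) : v (aeval X (hpoly K q)) = 1 := by
  rw [aeval_hpoly, map_prod]
  refine Finset.prod_eq_one fun α hα => ?_
  have hα' : T q α ≠ 0 := (Finset.mem_filter.1 hα).2
  refine le_antisymm ((v.map_sub _ _).trans (max_le h (v_const_le v α))) (not_lt.1 fun hlt => ?_)
  have h1 : v (T q (X - algebraMap K L α)) < 1 := by rwa [v_T_of_lt v hlt]
  rw [T_sub, T_algebraMap] at h1
  have h2 := (v.map_sub _ _).trans_lt (max_lt hT h1)
  rw [sub_sub_cancel, v_const v hα'] at h2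
  exact lt_irrefl _ h2

variable [CharP K q] [CharP L q] [IsAlgClosed L] (hK : Fintype.card K = q ^ 2) {X : L}
  (hX : Transcendental K X)

include hK in
lemma natDegree_hpoly : (hpoly K q).natDegree = q ^ 2 - q := by
  rw [hpoly, natDegree_prod_of_monic _ _ fun α _ => monic_X_sub_C α]
  simp only [natDegree_X_sub_C, Finset.sum_const, smul_eq_mul, mul_one]
  rw [← card_omega hK]

omit hqp [CharP K q] in
lemma hpoly_ne_zero : hpoly K q ≠ 0 :=
  Finset.prod_ne_zero_iff.2 fun α _ => X_sub_C_ne_zero α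

omit [CharP K q] [CharP L q] [IsAlgClosed L] in
/-- A nontrivial combination of the functions `p m_d`, which have distinct pole orders at infinity,
is nonzero at generic points, and its pole at infinity is bounded by that of `p m_D`. -/
lemma v_comb {Γ : Type*} [LinearOrderedCommGroupWithZero Γ] (v : Valuation L Γ) (hv : 1 < v X)
    {n D : ℕ} {m : ℕ → (ℕ → L) → L}
    (hm : ∀ d x, Gen q X n x → v (m d x) = v (x n) ^ d) {c : Fin (D + 1) → K} (hc : c ≠ 0)
    {x : ℕ → L} (hx : Gen q X n x) :
    v (∑ d, algebraMap K L (c d) * (T q (x 0) * m d x)) ≠ 0 ∧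
    v (∑ d, algebraMap K L (c d) * (T q (x 0) * m d x)) ≤ v (x n) ^ (q ^ (n + 1) + D) := by
  have h1 := v_gt v hv hx n le_rfl
  have hT : v (T q (x 0)) = v (x n) ^ q ^ (n + 1) := by
    rw [hx.2, v_T_of_gt v hv, ← v_pow_eq v hv hx n le_rfl, ← pow_mul, pow_succ]
  have hterm : ∀ d : Fin (D + 1), algebraMap K L (c d) * (T q (x 0) * m d x) ≠ 0 →
      v (algebraMap K L (c d) * (T q (x 0) * m d x)) = v (x n) ^ (q ^ (n + 1) + (d : ℕ)) := by
    intro d hd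
    have hcd : c d ≠ 0 := fun h => hd (by rw [h, map_zero, zero_mul])
    rw [map_mul, map_mul, v_const v hcd, one_mul, hT, hm d x hx, ← pow_add]
  rcases v_sum_of_distinct v Finset.univ
    (fun d : Fin (D + 1) => algebraMap K L (c d) * (T q (x 0) * m d x))
    (fun i _ j _ hi hj hij => by
      rw [hterm i hi, hterm j hj] at hij
      have := (pow_right_injective₀ (zero_lt_one.trans h1) h1.ne') hij
      exact Fin.ext (by simpa using this)) with h | ⟨j, -, hj0, hj, -⟩
  · exfalso
    refine hc (funext fun d => ?_)
    have hd := h d (Finset.mem_univ d)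
    have hmd : m d x ≠ 0 := by
      rw [← map_ne_zero v, hm d x hx]
      exact pow_ne_zero _ (zero_lt_one.trans h1).ne'
    simpa [hx.1.1, hmd] using hd
  · rw [hj, hterm j hj0]
    exact ⟨pow_ne_zero _ (zero_lt_one.trans h1).ne',
      pow_le_pow_right₀ h1.le (by have := j.2; omega)⟩

include hK hX in
/-- The functions `∑ c_d p m_d` are so few that products of two of them cannot vanish at all
rational points. -/
lemma exists_point_ne {Γ : Type*} [LinearOrderedCommGroupWithZero Γ] (v : Valuation L Γ)
    (hv : 1 < v X) {n D : ℕ} (hD : 2 * (q ^ (n + 1) + D) < q ^ (n + 2))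
    {m : ℕ → (ℕ → L) → L} (hM : ∀ d, Mem K q n (m d))
    (hm : ∀ d x, Gen q X n x → v (m d x) = v (x n) ^ d) {c c' : Fin (D + 1) → K} (hc : c ≠ 0)
    (hc' : c' ≠ 0) : ∃ x, Pt q n x ∧ IsRat K n x ∧
      (∑ d, algebraMap K L (c d) * (T q (x 0) * m d x)) ≠ 0 ∧
      (∑ d, algebraMap K L (c' d) * (T q (x 0) * m d x)) ≠ 0 := by
  by_contra! hcon
  set f : (Fin (D + 1) → K) → (ℕ → L) → L := fun c x =>
    ∑ d, algebraMap K L (c d) * (T q (x 0) * m d x) with hf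
  have hrep : ∀ c, Rep K q n (f c) := fun c => Rep.sum _ fun d _ =>
    Rep.smul _ ((Rep.T_comp (Rep.coord 0 (Nat.zero_le _))).mul (hM d).rep)
  have hI : ∀ c, InI q X n (f c) := fun c x hx A hA => by
    have h1 := fun d => (hM d).inI x hx A hA
    refine ⟨A.valuation.map_sum_le fun d _ => ?_, fun hT =>
      A.valuation.map_sum_lt one_ne_zero fun d _ => ?_⟩
    · rw [map_mul]
      exact mul_le_one' (v_const_le _ _) (h1 d).1
    · rw [map_mul]
      exact (mul_le_of_le_one_left zero_le (v_const_le _ _)).trans_lt ((h1 d).2 hT)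
  obtain ⟨u, hu, huf⟩ := Rep.exists_div hK ((hrep c).mul (hrep c')) fun x hx hr => by
    by_cases h : f c x = 0
    · rw [h, zero_mul]
    · rw [show f c' x = 0 from hcon x hx hr h, mul_zero]
  have huI : InI q X n u := by
    intro x hx A hA
    rcases (v_T_le (q := q) A.valuation hA).lt_or_eq with h | h
    · have h1 := congrArg A.valuation (huf x hx.1)
      rw [map_mul, map_mul, hx.2, v_hpoly _ hA h, one_mul] at h1
      have h2 : A.valuation (u x) < 1 := by
        rw [← h1]
        exact (mul_le_of_le_one_right zero_le (hI c' x hx A hA).1).trans_lt ((hI c x hx A hA).2 h)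
      exact ⟨h2.le, fun _ => h2⟩
    · refine ⟨hu.v_le_one hx.1 (by rwa [hx.2]) (by rwa [hx.2]), fun h' => absurd h h'.ne⟩
  obtain ⟨x, hx⟩ := exists_gen (T_ne_zero_of_transcendental hX hqp.out.two_le) n
  have b1 := v_comb v hv hm hc hx
  have b2 := v_comb v hv hm hc' hx
  have hux := congrArg v (huf x hx.1)
  rw [map_mul, map_mul] at hux
  rcases hu.ge_of_inI hK hX v hv huI with h | h
  · rw [h x hx.1, map_zero, mul_zero] at hux
    exact mul_ne_zero b1.1 b2.1 hux
  · have h3 := h x hx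
    have h1 := v_gt v hv hx n le_rfl
    have hq : q ^ 2 - q + q = q ^ 2 := Nat.sub_add_cancel (Nat.le_self_pow two_ne_zero q)
    rw [hx.2, v_aeval_of_gt v hv hpoly_ne_zero, natDegree_hpoly hK] at hux
    rw [v_T_of_gt v hv] at h3
    have h4 : v X ^ q ^ 2 ≤ v (x n) ^ (2 * (q ^ (n + 1) + D)) := by
      calc v X ^ q ^ 2 = v X ^ (q ^ 2 - q) * v X ^ q := by rw [← pow_add, hq]
        _ ≤ v X ^ (q ^ 2 - q) * v (u x) := mul_le_mul_right h3 _
        _ = v (f c x) * v (f c' x) := hux.symm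
        _ ≤ _ := by
          rw [two_mul, pow_add]
          exact mul_le_mul' b1.2 b2.2
    rw [← v_pow_eq v hv hx n le_rfl, ← pow_mul, ← pow_add] at h4
    exact absurd h4 (not_le.2 (pow_lt_pow_right₀ h1 hD))

include hK hX in
theorem exists_code_of_transcendental {n D : ℕ} (hD : 2 * (q ^ (n + 1) + D) < q ^ (n + 2)) :
    ∃ C : Submodule K (Fin ((q ^ 2 - q) * q ^ n) → K),
      IsLinIntersecting C ∧ Module.finrank K C = D + 1 := by
  have hX0 : X ≠ 0 := fun h => hX (h ▸ isAlgebraic_zero)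
  obtain ⟨A, hA⟩ := exists_valuationSubring (K := K) (t := X⁻¹)
    (fun h => hX (IsAlgebraic.inv_iff.1 h))
  have hv : 1 < A.valuation X := by
    rwa [map_inv₀, inv_lt_one₀ (zero_lt_iff.2 ((_root_.map_ne_zero _).2 hX0))] at hA
  choose m hM hm using fun d => exists_mem_pow (K := K) (q := q) A.valuation hv n d
  obtain ⟨pt, hpt, hall⟩ := exists_enum (K := K) (L := L) hK n
  have hval : ∀ (d : Fin (D + 1)) i, ∃ a : K, algebraMap K L a = T q (pt i 0) * m d (pt i) :=
    fun d i => Rep.mem_range ((Rep.T_comp (Rep.coord 0 (Nat.zero_le _))).mul (hM d).rep)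
      (hpt i).1 (hpt i).2
  choose e he using hval
  have hcode : ∀ (c : Fin (D + 1) → K) i, algebraMap K L (Fintype.linearCombination K e c i)
      = ∑ d, algebraMap K L (c d) * (T q (pt i 0) * m d (pt i)) := fun c i => by
    simp [Fintype.linearCombination_apply, he]
  have key : ∀ c c' : Fin (D + 1) → K, c ≠ 0 → c' ≠ 0 → ∃ i,
      Fintype.linearCombination K e c i ≠ 0 ∧ Fintype.linearCombination K e c' i ≠ 0 := by
    intro c c' hc hc'
    obtain ⟨x, hx, hr, h1, h2⟩ := exists_point_ne hK hX A.valuation hv hD hM hm hc hc'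
    obtain ⟨i, hi⟩ := hall x hx hr
    have hmi : ∀ d, m d (pt i) = m d x := fun d =>
      (hM d).rep.eq_of_eq hx fun j hj => (hi j hj).symm
    refine ⟨i, ?_, ?_⟩ <;>
    · rw [← map_ne_zero (algebraMap K L), hcode]
      simpa only [hmi, ← hi 0 (Nat.zero_le _)]
  have hinj : Function.Injective (Fintype.linearCombination K e) := by
    rw [injective_iff_map_eq_zero]
    intro c hc
    by_contra hne
    obtain ⟨i, hi, -⟩ := key c c hne hne
    exact hi (by rw [hc]; rfl)
  refine ⟨LinearMap.range (Fintype.linearCombination K e), ?_, ?_⟩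
  · rintro _ ⟨c, rfl⟩ h _ ⟨c', rfl⟩ h'
    exact key c c' (by rintro rfl; exact h (map_zero _)) (by rintro rfl; exact h' (map_zero _))
  · rw [LinearMap.finrank_range_of_inj hinj, Module.finrank_fin_fun]

end Code

/-- Linear intersecting codes from the tower, over any field with `q²` elements. -/
theorem exists_code (q : ℕ) [hqp : Fact q.Prime] (K : Type*) [Field K] [Fintype K]
    (hK : Fintype.card K = q ^ 2) {n D : ℕ} (hD : 2 * (q ^ (n + 1) + D) < q ^ (n + 2)) :
    ∃ C : Submodule K (Fin ((q ^ 2 - q) * q ^ n) → K),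
      IsLinIntersecting C ∧ Module.finrank K C = D + 1 := by
  have : CharP K q := charP_of_card_eq_prime_pow hK
  let L := AlgebraicClosure (RatFunc K)
  have : CharP L q := charP_of_injective_algebraMap (algebraMap K L).injective q
  have hX : Transcendental K (algebraMap (RatFunc K) L RatFunc.X) :=
    (transcendental_algebraMap_iff (algebraMap (RatFunc K) L).injective).2 RatFunc.transcendental_X
  exact exists_code_of_transcendental hK hX hD

lemma finrank_le_of_code {F : Type*} [Field F] {n : ℕ} (C : Submodule F (Fin n → F)) :
    Module.finrank F C ≤ n := by
  simpa using C.finrank_le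

lemma le_maxIntersectingDim {F : Type*} [Field F] {n : ℕ} {C : Submodule F (Fin n → F)}
    (hC : IsLinIntersecting C) : Module.finrank F C ≤ maxIntersectingDim F n := by
  refine le_csSup ⟨n, ?_⟩ ⟨C, hC, rfl⟩
  rintro _ ⟨C', -, rfl⟩
  exact finrank_le_of_code C'

lemma maxIntersectingDim_le (F : Type*) [Field F] (n : ℕ) : maxIntersectingDim F n ≤ n := by
  refine csSup_le' ?_
  rintro _ ⟨C', -, rfl⟩
  exact finrank_le_of_code C'

end IntersectingTower

/-- The asymptotic maximal achievable rate for linear intersecting codes over the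
field with `121` elements satisfies `R₁₂₁ ≥ 9/20`. -/
theorem R121_ge
    (F : Type*) [Field F] [Fintype F] (hF : Fintype.card F = 121) :
    (9 : ℝ) / 20 ≤ Rq F := by
  have : Fact (Nat.Prime 11) := ⟨by norm_num⟩
  have hrate : ∀ n : ℕ, (9 : ℝ) / 20 ≤
      (maxIntersectingDim F (10 * 11 ^ (n + 1)) : ℝ) / ((10 * 11 ^ (n + 1) : ℕ) : ℝ) := by
    intro n
    have hodd : 11 ^ (n + 1) % 2 = 1 := Nat.odd_iff.1 (Odd.pow (by decide))
    have h2 : 11 ^ (n + 2) = 11 * 11 ^ (n + 1) := pow_succ' _ _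
    have hpos : 0 < 11 ^ (n + 1) := by positivity
    obtain ⟨C, hC, hdim⟩ := IntersectingTower.exists_code 11 F (by rw [hF]; norm_num) (n := n)
      (D := (9 * 11 ^ (n + 1) - 1) / 2) (by omega)
    have hlen : (11 ^ 2 - 11) * 11 ^ n = 10 * 11 ^ (n + 1) := by rw [pow_succ]; ring
    have h3 := IntersectingTower.le_maxIntersectingDim hC
    rw [hdim, hlen] at h3
    have h4 : 9 * 11 ^ (n + 1) ≤ 2 * maxIntersectingDim F (10 * 11 ^ (n + 1)) := by omega
    have h5 : (9 : ℝ) * 11 ^ (n + 1) ≤ 2 * maxIntersectingDim F (10 * 11 ^ (n + 1)) := by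
      exact_mod_cast h4
    rw [le_div_iff₀ (by positivity)]
    push_cast
    linarith
  refine Filter.le_limsup_of_frequently_le ?_ ?_
  · rw [Filter.frequently_atTop]
    intro N
    refine ⟨10 * 11 ^ (N + 1), ?_, hrate N⟩
    have : N + 1 < 11 ^ (N + 1) := Nat.lt_pow_self (by norm_num)
    omega
  · refine Filter.isBoundedUnder_of ⟨1, fun n => ?_⟩
    exact div_le_one_of_le₀ (by exact_mod_cast IntersectingTower.maxIntersectingDim_le F n)
      (Nat.cast_nonneg n)
end
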